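/- Let n ≥ 3, let A, B ⊆ M_n(ℂ) be block upper-triangular subalgebras, and let φ : A → B be a continuous injective map which preserves commutativity and spectrum. Then one of the following holds: (a) A ⊆ B and there exists an invertible T ∈ B such that φ(X) = T X T⁻¹ for all X ∈ A; or (b) A^⊙ ⊆ B and there exists an invertible T ∈ B such that φ(X) = T X^⊙ T⁻¹ for all X ∈ A, where X^⊙ := J Xᵗ J and J is the exchange matrix (J_{ij} = 1 iff i + j = n + 1). -/

import Mathlib

open Matrix

noncomputable section

/-- The block index function: `blockIdx k i` is the index `s` (0-based) of the diagonal
block containing row/column `i`, for block sizes given by the list `k`. -/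
def blockIdx (k : List ℕ) (i : ℕ) : ℕ :=
  ((Finset.range k.length).filter (fun s => (k.take (s + 1)).sum ≤ i)).card

/-- The block upper-triangular algebra `𝒜_{k₁,…,k_r} ⊆ M_n(ℂ)` determined by the
list of block sizes `k`. -/
def blockAlg (n : ℕ) (k : List ℕ) : Set (Matrix (Fin n) (Fin n) ℂ) :=
  { X | ∀ i j : Fin n, blockIdx k (j : ℕ) < blockIdx k (i : ℕ) → X i j = 0 }

/-- A subset of `M_n(ℂ)` is a block upper-triangular subalgebra if it is of the form
`blockAlg n k` for some list `k` of positive integers summing to `n`. -/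
def IsBlockUT (n : ℕ) (𝒜 : Set (Matrix (Fin n) (Fin n) ℂ)) : Prop :=
  ∃ k : List ℕ, (∀ m ∈ k, 0 < m) ∧ k.sum = n ∧ 𝒜 = blockAlg n k

/-- The exchange matrix `J` (ones on the antidiagonal). -/
def exchMat (n : ℕ) : Matrix (Fin n) (Fin n) ℂ :=
  Matrix.of fun i j => if (i : ℕ) + (j : ℕ) + 1 = n then 1 else 0

/-! The matrices `S (diag l) S⁻¹` form a commuting family. The image of one with distinct entries
`l` has simple spectrum, so the images of all the others, commuting with it, are diagonal in its
eigenbasis; by continuity the eigenvalue in a given position follows one fixed coordinate of `l`.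
Thus `φ` acts on the family as `S (diag l) S⁻¹ ↦ T (diag l) T⁻¹`. In particular `φ` maps rank-one
idempotents to rank-one idempotents and preserves their orthogonality, and after a conjugation it
fixes all diagonal matrices.

Let `b` and `t` be the first and last index. The idempotents `E_jj - s E_bj` are then mapped to
idempotents of the same shape, after composing `φ` with the transpose if necessary; a third index
excludes a mixture of both types. Consequently `φ` acts on idempotents supported in row `b` through
maps `ρ_j` of the coordinates, and on those supported in column `t` through maps `γ_j`.
Orthogonality between the two kinds yields `ρ_t (p q) = ρ_k p · γ_k q` and the additivity of `ρ_t`,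
and continuity at `c E_bt` makes `ρ_t` linear. After conjugation by a diagonal matrix, `φ` fixes all
idempotents in row `b` and column `t`, then by orthogonality every rank-one idempotent, and
therefore every matrix with simple spectrum. Such matrices are dense, so `φ` is the identity.

Finally, if `T` conjugates every `E_ac` with `a ≤ c` into `ℬ`, then a rank count shows `T ∈ ℬ`.
-/

section Diagonalization

variable {ι K : Type*} [Fintype ι] [DecidableEq ι] [Field K]

/-- The commutative algebra of matrices diagonal in the basis formed by the columns of the
invertible matrix `S`, parametrized by the eigenvalues `l`. -/
def conjDiagonal (S : (Matrix ι ι K)ˣ) : (ι → K) →ₐ[K] Matrix ι ι K :=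
  (MulSemiringAction.toAlgHom K (Matrix ι ι K) (ConjAct.toConjAct S)).comp
    (Matrix.diagonalAlgHom K)

theorem conjDiagonal_apply (S : (Matrix ι ι K)ˣ) (l : ι → K) :
    conjDiagonal S l = S * diagonal l * S⁻¹.val := rfl

theorem conjDiagonal_one (l : ι → K) : conjDiagonal 1 l = diagonal l := by
  simp [conjDiagonal_apply]

theorem spectrum_transpose (M : Matrix ι ι K) : spectrum K Mᵀ = spectrum K M := by
  ext z
  rw [mem_spectrum_iff_isRoot_charpoly, mem_spectrum_iff_isRoot_charpoly, charpoly_transpose]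

theorem inv_mul_conjDiagonal_mul (S : (Matrix ι ι K)ˣ) (l : ι → K) :
    S⁻¹.val * conjDiagonal S l * S = diagonal l := by
  simp [conjDiagonal_apply, mul_assoc, -coe_units_inv]

theorem spectrum_conjDiagonal (S : (Matrix ι ι K)ˣ) (l : ι → K) :
    spectrum K (conjDiagonal S l) = Set.range l := by
  rw [conjDiagonal_apply, spectrum.units_conjugate, spectrum_diagonal]

theorem continuous_conjDiagonal [TopologicalSpace K] [IsTopologicalSemiring K]
    (S : (Matrix ι ι K)ˣ) : Continuous (conjDiagonal S) :=
  (continuous_const.matrix_mul continuous_id.matrix_diagonal).matrix_mul continuous_const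

theorem exists_eq_conjDiagonal (M : Matrix ι ι K) {d : ι → K} (hd : Function.Injective d)
    (h : Set.range d ⊆ spectrum K M) : ∃ T, M = conjDiagonal T d := by
  have heig (i : ι) : ∃ v, Module.End.HasEigenvector (toLin' M) (d i) v := by
    apply Module.End.HasEigenvalue.exists_hasEigenvector
    rw [Module.End.hasEigenvalue_iff_mem_spectrum, spectrum_toLin']
    exact h ⟨i, rfl⟩
  choose v hv using heig
  have hunit : IsUnit (of v)ᵀ := by
    rw [← linearIndependent_cols_iff_isUnit]
    exact Module.End.eigenvectors_linearIndependent' _ d hd v hv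
  obtain ⟨T, hT⟩ := hunit
  have hMT : M * T = T * diagonal d := by
    ext i j
    have := congrFun (hv j).apply_eq_smul i
    rw [hT, mul_diagonal]
    simpa [mul_apply, mulVec, dotProduct, mul_comm] using this
  exact ⟨T, by rw [conjDiagonal_apply, ← hMT, mul_assoc, Units.mul_inv, mul_one]⟩

theorem exists_eq_conjDiagonal_of_commute {M : Matrix ι ι K} {T : (Matrix ι ι K)ˣ} {v : ι → K}
    (hv : Function.Injective v) (h : Commute M (conjDiagonal T v)) :
    ∃ m, M = conjDiagonal T m := by
  have hcomm : Commute (T⁻¹.val * M * T) (diagonal v) := by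
    have := congrArg (fun Z => (T⁻¹.val * Z * T : Matrix ι ι K)) h.eq
    simpa [conjDiagonal_apply, mul_assoc, Commute, SemiconjBy] using this
  have hdiag : (T⁻¹.val * M * T : Matrix ι ι K).IsDiag := by
    intro i j hij
    have := congrFun₂ hcomm.eq i j
    rw [mul_diagonal, diagonal_mul, mul_comm, ← sub_eq_zero, ← sub_mul] at this
    exact (mul_eq_zero.mp this).resolve_left (sub_ne_zero.mpr fun h => hij (hv h).symm)
  refine ⟨diag (T⁻¹.val * M * T), ?_⟩
  rw [conjDiagonal_apply, hdiag.diagonal_diag]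
  simp [mul_assoc, -coe_units_inv]

theorem conjDiagonal_mem {𝒜 : Subalgebra K (Matrix ι ι K)} {S : (Matrix ι ι K)ˣ} {d : ι → K}
    (hd : Function.Injective d) (h : conjDiagonal S d ∈ 𝒜) (l : ι → K) :
    conjDiagonal S l ∈ 𝒜 := by
  have hl : Polynomial.aeval d (Lagrange.interpolate Finset.univ d l) = l := by
    funext i
    rw [Polynomial.aeval_pi_apply₂, Polynomial.coe_aeval_eq_eval]
    exact Lagrange.eval_interpolate_at_node l hd.injOn (Finset.mem_univ i)
  rw [← hl, ← Polynomial.aeval_algHom_apply]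
  exact Algebra.adjoin_le (Set.singleton_subset_iff.mpr h)
    (Polynomial.aeval_mem_adjoin_singleton _ _)

end Diagonalization

section ContinuousSelection

variable {ι : Type*}

theorem countable_setOf_not_injective_lineMap [Countable ι] {v : ι → ℂ} (l : ι → ℂ)
    (hv : Function.Injective v) :
    {z : ℂ | ¬ Function.Injective (AffineMap.lineMap v l z : ι → ℂ)}.Countable := by
  refine (Set.countable_range fun p : ι × ι =>
    (v p.2 - v p.1) / ((l p.1 - v p.1) - (l p.2 - v p.2))).mono fun z hz => ?_
  obtain ⟨i, j, hij, hne⟩ := Function.not_injective_iff.mp hz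
  have hroot : z * ((l i - v i) - (l j - v j)) = v j - v i := by
    simp only [AffineMap.lineMap_apply, vsub_eq_sub, vadd_eq_add, Pi.add_apply, Pi.smul_apply,
      Pi.sub_apply, smul_eq_mul] at hij
    linear_combination hij
  have hvne : v j - v i ≠ 0 := sub_ne_zero.mpr fun h => hne (hv h).symm
  exact ⟨(i, j), by simp [← hroot, right_ne_zero_of_mul (hroot ▸ hvne)]⟩

variable [Finite ι]

theorem eqOn_of_isPreconnected_of_forall_exists_eq {X Y : Type*} [TopologicalSpace X]
    [TopologicalSpace Y] [T2Space Y] {U : Set X}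
    (hU : IsPreconnected U) {f : X → Y} {w : ι → X → Y} (hf : Continuous f)
    (hw : ∀ i, Continuous (w i)) (hinj : ∀ z ∈ U, Function.Injective fun i => w i z)
    (hsel : ∀ z ∈ U, ∃ k, f z = w k z) {i : ι} {z₀ : X} (hz₀ : z₀ ∈ U) (h₀ : f z₀ = w i z₀) :
    U.EqOn f (w i) := by
  by_contra! hne
  obtain ⟨z, hz, hzne⟩ : ∃ z ∈ U, f z ≠ w i z := by simpa [Set.EqOn] using hne
  obtain ⟨k, hk⟩ := hsel z hz
  obtain ⟨y, hyU, hyi, hyk⟩ := isPreconnected_closed_iff.mp hU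
    {z | f z = w i z} (⋃ k ∈ {k | k ≠ i}, {z | f z = w k z}) (isClosed_eq hf (hw i))
    ((Set.toFinite _).isClosed_biUnion fun k _ => isClosed_eq hf (hw k))
    (fun y hy => by
      obtain ⟨k, hk⟩ := hsel y hy
      rcases eq_or_ne k i with rfl | hki
      · exact Or.inl hk
      · exact Or.inr (Set.mem_biUnion hki hk))
    ⟨z₀, hz₀, h₀⟩ ⟨z, hz, Set.mem_biUnion (show k ≠ i by rintro rfl; exact hzne hk) hk⟩
  simp only [Set.mem_iUnion] at hyk
  obtain ⟨k, hki, hk⟩ := hyk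
  exact hki (hinj y hyU (hk.symm.trans hyi))

-- A line through `v` leaves the injective tuples at countably many parameters only, so the
-- injective part of the line is connected and the choice of coordinate is constant on it.
theorem eq_apply_of_forall_mem_range {μ : (ι → ℂ) → ℂ} (hμ : Continuous μ)
    (hrange : ∀ l, μ l ∈ Set.range l) {v : ι → ℂ} (hv : Function.Injective v) {i : ι}
    (hi : μ v = v i) (l : ι → ℂ) : μ l = l i := by
  set U := {z : ℂ | ¬ Function.Injective (AffineMap.lineMap v l z : ι → ℂ)}ᶜ
  have hbad := countable_setOf_not_injective_lineMap l hv
  have hline : Continuous (AffineMap.lineMap v l : ℂ → ι → ℂ) := AffineMap.lineMap_continuous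
  have hcoord (j : ι) : Continuous fun z : ℂ => (AffineMap.lineMap v l z : ι → ℂ) j :=
    (continuous_apply j).comp hline
  have heq : U.EqOn (fun z => μ (AffineMap.lineMap v l z))
      (fun z => (AffineMap.lineMap v l z : ι → ℂ) i) := by
    refine eqOn_of_isPreconnected_of_forall_exists_eq
      (hbad.isPathConnected_compl_of_one_lt_rank (by simp)).isConnected.isPreconnected
      (hμ.comp hline) hcoord (fun z hz => not_not.mp hz) (fun z _ => ?_) (z₀ := 0) ?_ ?_
    · obtain ⟨k, hk⟩ := hrange (AffineMap.lineMap v l z)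
      exact ⟨k, hk.symm⟩
    · simpa [U] using hv
    · simpa using hi
  have := congrFun ((hμ.comp hline).ext_on (hbad.dense_compl ℂ) (hcoord i) heq) 1
  simpa using this

end ContinuousSelection

section Density

theorem separable_map_evalRingHom_iff {K : Type*} [Field K] [CharZero K]
    {p : Polynomial (Polynomial K)} (hp : p.Monic) (z : K) :
    (p.map (Polynomial.evalRingHom z)).Separable ↔
      ¬ (p.resultant p.derivative p.natDegree (p.natDegree - 1)).IsRoot z := by
  have hdeg : (p.map (Polynomial.evalRingHom z)).natDegree = p.natDegree := hp.natDegree_map _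
  rw [Polynomial.separable_def, ← Polynomial.isUnit_resultant_iff_isCoprime (hp.map _),
    Polynomial.natDegree_derivative, hdeg, Polynomial.derivative_map,
    Polynomial.resultant_map_map, isUnit_iff_ne_zero, Polynomial.coe_evalRingHom,
    Polynomial.IsRoot.def]

variable {ι : Type*} [Fintype ι] [DecidableEq ι]

theorem finite_setOf_not_separable_charpoly_lineMap {K : Type*} [Field K] [CharZero K]
    {A : Matrix ι ι K} (hA : A.charpoly.Separable) (X : Matrix ι ι K) :
    {z : K | ¬ (AffineMap.lineMap A X z).charpoly.Separable}.Finite := by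
  let N : Matrix ι ι (Polynomial K) :=
    A.map Polynomial.C + (Polynomial.X : Polynomial K) • (X - A).map Polynomial.C
  have hN (z : K) :
      N.charpoly.map (Polynomial.evalRingHom z) = (AffineMap.lineMap A X z).charpoly := by
    rw [← charpoly_map]
    congr 1
    ext i j
    simp [N, AffineMap.lineMap_apply, add_comm]
  have hsep (z : K) : (AffineMap.lineMap A X z).charpoly.Separable ↔ _ :=
    hN z ▸ separable_map_evalRingHom_iff N.charpoly_monic z
  have hne : N.charpoly.resultant N.charpoly.derivative N.charpoly.natDegree
      (N.charpoly.natDegree - 1) ≠ 0 := by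
    intro h
    exact (hsep 0).mp (by simpa using hA) (by rw [h]; exact Polynomial.eval_zero)
  simpa only [hsep, not_not] using Polynomial.finite_setOfPred_isRoot hne

theorem mem_closure_separable_charpoly {𝒜 : Subalgebra ℂ (Matrix ι ι ℂ)} {A X : Matrix ι ι ℂ}
    (hA : A ∈ 𝒜) (hsep : A.charpoly.Separable) (hX : X ∈ 𝒜) :
    X ∈ closure {Y | Y ∈ 𝒜 ∧ Y.charpoly.Separable} := by
  have hdense : Dense {z : ℂ | ¬ (AffineMap.lineMap A X z).charpoly.Separable}ᶜ :=
    (finite_setOf_not_separable_charpoly_lineMap hsep X).countable.dense_compl ℂ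
  have hline : Continuous (AffineMap.lineMap A X : ℂ → Matrix ι ι ℂ) :=
    AffineMap.lineMap_continuous
  have hmem (z : ℂ) : AffineMap.lineMap A X z ∈ 𝒜 := by
    rw [AffineMap.lineMap_apply]
    exact 𝒜.add_mem (𝒜.smul_mem (𝒜.sub_mem hX hA) z) hA
  rw [← AffineMap.lineMap_apply_one (k := ℂ) A X]
  exact map_mem_closure hline (hdense 1) fun z hz => ⟨hmem z, not_not.mp hz⟩

theorem exists_eq_conjDiagonal_of_separable_charpoly {Y : Matrix ι ι ℂ}
    (hY : Y.charpoly.Separable) : ∃ T d, Function.Injective d ∧ Y = conjDiagonal T d := by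
  have hcard : Fintype.card Y.charpoly.roots.toFinset = Fintype.card ι := by
    rw [Fintype.card_coe, Multiset.toFinset_card_of_nodup (Polynomial.nodup_roots hY),
      IsAlgClosed.card_roots_eq_natDegree, charpoly_natDegree_eq_dim]
  let e := Fintype.equivOfCardEq hcard.symm
  have hinj : Function.Injective fun i => (e i : ℂ) := Subtype.val_injective.comp e.injective
  obtain ⟨T, hT⟩ := exists_eq_conjDiagonal Y hinj (by
    rintro _ ⟨i, rfl⟩
    rw [mem_spectrum_iff_isRoot_charpoly]
    exact Polynomial.isRoot_of_mem_roots (Multiset.mem_toFinset.mp (e i).2))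
  exact ⟨T, _, hinj, hT⟩

theorem exists_injective_complex (ι : Type*) [Finite ι] :
    ∃ v : ι → ℂ, Function.Injective v := by
  obtain ⟨n, ⟨e⟩⟩ := Finite.exists_equiv_fin ι
  exact ⟨fun i => (e i : ℕ), Nat.cast_injective.comp (Fin.val_injective.comp e.injective)⟩

theorem mem_closure_conjDiagonal {𝒜 : Subalgebra ℂ (Matrix ι ι ℂ)}
    (h𝒜 : ∀ l, diagonal l ∈ 𝒜) {X : Matrix ι ι ℂ} (hX : X ∈ 𝒜) :
    X ∈ closure {Y | Y ∈ 𝒜 ∧ ∃ T d, Function.Injective d ∧ Y = conjDiagonal T d} := by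
  obtain ⟨v, hv⟩ := exists_injective_complex ι
  have hsep : (diagonal v).charpoly.Separable := by
    rw [charpoly_diagonal]
    exact Polynomial.separable_prod_X_sub_C_iff.mpr hv
  exact closure_mono (fun _ => And.imp_right exists_eq_conjDiagonal_of_separable_charpoly)
    (mem_closure_separable_charpoly (h𝒜 v) hsep hX)

end Density

/-- A continuous injective map on the subalgebra `𝒜` that preserves commutativity and spectrum; the
values of `φ` outside `𝒜` are irrelevant. -/
structure IsPreserver {ι : Type*} [Fintype ι] [DecidableEq ι]
    (𝒜 : Subalgebra ℂ (Matrix ι ι ℂ)) (φ : Matrix ι ι ℂ → Matrix ι ι ℂ) : Prop where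
  continuousOn : ContinuousOn φ 𝒜
  injOn : Set.InjOn φ 𝒜
  commute : ∀ X ∈ 𝒜, ∀ Y ∈ 𝒜, Commute X Y → Commute (φ X) (φ Y)
  spectrum_eq : ∀ X ∈ 𝒜, spectrum ℂ (φ X) = spectrum ℂ X

namespace IsPreserver

variable {ι : Type*} [Fintype ι] [DecidableEq ι] {𝒜 : Subalgebra ℂ (Matrix ι ι ℂ)}
  {φ : Matrix ι ι ℂ → Matrix ι ι ℂ}

theorem conj (hφ : IsPreserver 𝒜 φ) (T : (Matrix ι ι ℂ)ˣ) :
    IsPreserver 𝒜 fun X => T * φ X * T⁻¹.val where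
  continuousOn := (continuousOn_const.mul hφ.continuousOn).mul continuousOn_const
  injOn X hX Y hY h := hφ.injOn hX hY (by simpa [-coe_units_inv] using h)
  commute X hX Y hY h := by
    have := (hφ.commute X hX Y hY h).eq
    simp only [Commute, SemiconjBy, mul_assoc, Units.inv_mul_cancel_left]
    rw [← mul_assoc (φ X), this, mul_assoc]
  spectrum_eq X hX := by rw [spectrum.units_conjugate, hφ.spectrum_eq X hX]

theorem transpose (hφ : IsPreserver 𝒜 φ) : IsPreserver 𝒜 fun X => (φ X)ᵀ where
  continuousOn := continuous_id.matrix_transpose.comp_continuousOn hφ.continuousOn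
  injOn X hX Y hY h := hφ.injOn hX hY (transpose_injective h)
  commute X hX Y hY h := by
    have := (hφ.commute X hX Y hY h).eq
    rw [Commute, SemiconjBy, ← transpose_mul, ← transpose_mul, this]
  spectrum_eq X hX := by rw [spectrum_transpose, hφ.spectrum_eq X hX]

theorem exists_conjDiagonal (hφ : IsPreserver 𝒜 φ) {S : (Matrix ι ι ℂ)ˣ}
    (hS : ∀ l, conjDiagonal S l ∈ 𝒜) :
    ∃ T, ∀ l, φ (conjDiagonal S l) = conjDiagonal T l := by
  obtain ⟨v, hv⟩ := exists_injective_complex ι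
  have hspec (l : ι → ℂ) : spectrum ℂ (φ (conjDiagonal S l)) = Set.range l := by
    rw [hφ.spectrum_eq _ (hS l), spectrum_conjDiagonal]
  obtain ⟨T, hT⟩ := exists_eq_conjDiagonal _ hv (hspec v).ge
  have hcomm (l : ι → ℂ) : Commute (φ (conjDiagonal S l)) (conjDiagonal T v) :=
    hT ▸ hφ.commute _ (hS l) _ (hS v) ((Commute.all l v).map (conjDiagonal S))
  choose μ hμ using fun l => exists_eq_conjDiagonal_of_commute hv (hcomm l)
  have hμ_eq (l : ι → ℂ) : diagonal (μ l) = T⁻¹.val * φ (conjDiagonal S l) * T := by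
    rw [hμ l, inv_mul_conjDiagonal_mul]
  have hcont : Continuous fun l => diagonal (μ l) := by
    simp only [hμ_eq]
    exact (continuous_const.mul (hφ.continuousOn.comp_continuous
      (continuous_conjDiagonal S) hS)).mul continuous_const
  have hcoord (i : ι) : Continuous fun l => μ l i := by
    simpa using hcont.matrix_elem i i
  have hrange (i : ι) (l : ι → ℂ) : μ l i ∈ Set.range l := by
    rw [← hspec l, hμ l, spectrum_conjDiagonal]
    exact ⟨i, rfl⟩
  have hμv : μ v = v := by
    apply diagonal_injective
    rw [hμ_eq, hT, inv_mul_conjDiagonal_mul]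
  refine ⟨T, fun l => ?_⟩
  rw [hμ l, funext fun i =>
    eq_apply_of_forall_mem_range (hcoord i) (hrange i) hv (congrFun hμv i) l]

end IsPreserver

section RankOneIdempotents

theorem units_inv_mem_blockTriangularSubalgebra {ι K α : Type*} [Fintype ι] [DecidableEq ι]
    [Field K] [LinearOrder α] {κ : ι → α} {S : (Matrix ι ι K)ˣ}
    (hS : S.val ∈ blockTriangularSubalgebra K K κ) :
    S⁻¹.val ∈ blockTriangularSubalgebra K K κ := by
  let := S.invertible
  rw [coe_units_inv]
  exact blockTriangular_inv_of_blockTriangular hS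

/-- An idempotent matrix of rank one, presented as `vec * covecᵀ` with `covec ⬝ᵥ vec = 1`; the
presentation is unique up to rescaling `vec` and `covec` by inverse factors. -/
structure RankOneIdempotent (ι K : Type*) [Fintype ι] [Field K] where
  vec : ι → K
  covec : ι → K
  covec_dotProduct_vec : covec ⬝ᵥ vec = 1

namespace RankOneIdempotent

variable {ι K : Type*} [Fintype ι] [Field K]

/-- The idempotent matrix itself. -/
def toMatrix (P : RankOneIdempotent ι K) : Matrix ι ι K := vecMulVec P.vec P.covec

/-- The transposed idempotent. -/
def swap (P : RankOneIdempotent ι K) : RankOneIdempotent ι K :=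
  ⟨P.covec, P.vec, by rw [dotProduct_comm, P.covec_dotProduct_vec]⟩

/-- Orthogonality of idempotents: both products of their matrices vanish. -/
def Orth (P Q : RankOneIdempotent ι K) : Prop :=
  P.covec ⬝ᵥ Q.vec = 0 ∧ Q.covec ⬝ᵥ P.vec = 0

theorem transpose_toMatrix (P : RankOneIdempotent ι K) : P.toMatrixᵀ = P.swap.toMatrix :=
  transpose_vecMulVec _ _

theorem toMatrix_apply (P : RankOneIdempotent ι K) (i j : ι) :
    P.toMatrix i j = P.vec i * P.covec j := rfl

theorem toMatrix_mul_toMatrix (P Q : RankOneIdempotent ι K) :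
    P.toMatrix * Q.toMatrix = (P.covec ⬝ᵥ Q.vec) • vecMulVec P.vec Q.covec := by
  rw [toMatrix, toMatrix, vecMulVec_mul_vecMulVec, vecMulVec_smul]

theorem vec_ne_zero (P : RankOneIdempotent ι K) : P.vec ≠ 0 := fun h => by
  simpa [h] using P.covec_dotProduct_vec

theorem covec_ne_zero (P : RankOneIdempotent ι K) : P.covec ≠ 0 := P.swap.vec_ne_zero

theorem toMatrix_mul_self (P : RankOneIdempotent ι K) : P.toMatrix * P.toMatrix = P.toMatrix := by
  rw [toMatrix_mul_toMatrix, P.covec_dotProduct_vec, one_smul, toMatrix]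

theorem toMatrix_ne_zero (P : RankOneIdempotent ι K) : P.toMatrix ≠ 0 :=
  vecMulVec_ne_zero P.vec_ne_zero P.covec_ne_zero

theorem orth_iff {P Q : RankOneIdempotent ι K} :
    P.Orth Q ↔ P.toMatrix * Q.toMatrix = 0 ∧ Q.toMatrix * P.toMatrix = 0 := by
  have h (R S : RankOneIdempotent ι K) : vecMulVec R.vec S.covec ≠ 0 :=
    vecMulVec_ne_zero R.vec_ne_zero S.covec_ne_zero
  simp [Orth, toMatrix_mul_toMatrix, h]

theorem Orth.commute {P Q : RankOneIdempotent ι K} (h : P.Orth Q) :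
    Commute P.toMatrix Q.toMatrix := by
  rw [Commute, SemiconjBy, (orth_iff.mp h).1, (orth_iff.mp h).2]

theorem Orth.toMatrix_ne {P Q : RankOneIdempotent ι K} (h : P.Orth Q) :
    P.toMatrix ≠ Q.toMatrix := by
  intro heq
  apply P.toMatrix_ne_zero
  rw [← P.toMatrix_mul_self]
  exact (congrArg (P.toMatrix * ·) heq).trans (orth_iff.mp h).1

theorem toMatrix_mul_mul_toMatrix (P Q : RankOneIdempotent ι K) :
    P.toMatrix * Q.toMatrix * P.toMatrix =
      ((P.covec ⬝ᵥ Q.vec) * (Q.covec ⬝ᵥ P.vec)) • P.toMatrix := by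
  rw [toMatrix_mul_toMatrix, smul_mul_assoc, toMatrix, vecMulVec_mul_vecMulVec, vecMulVec_smul,
    smul_smul]

-- `PQ = PQP` is a multiple of `P`, and `PQ = QPQ` is the same multiple of `Q`.
theorem orth_of_commute {P Q : RankOneIdempotent ι K} (h : Commute P.toMatrix Q.toMatrix)
    (hne : P.toMatrix ≠ Q.toMatrix) : P.Orth Q := by
  suffices hPQ : P.toMatrix * Q.toMatrix = 0 from orth_iff.mpr ⟨hPQ, h.eq ▸ hPQ⟩
  set c := (P.covec ⬝ᵥ Q.vec) * (Q.covec ⬝ᵥ P.vec) with hc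
  have hP : P.toMatrix * Q.toMatrix = c • P.toMatrix := by
    rw [← toMatrix_mul_mul_toMatrix, mul_assoc, ← h.eq, ← mul_assoc, toMatrix_mul_self]
  have hQ : P.toMatrix * Q.toMatrix = c • Q.toMatrix := by
    rw [hc, mul_comm, ← toMatrix_mul_mul_toMatrix, ← h.eq, mul_assoc, toMatrix_mul_self]
  have hc₀ : c = 0 := by
    by_contra hc₀
    exact hne (smul_right_injective _ hc₀ (hP.symm.trans hQ))
  rw [hP, hc₀, zero_smul]

/-- The idempotent with column `e_b` and row `f`, whose matrix lives in the `b`-th row. -/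
def ofRow [DecidableEq ι] (b : ι) (f : ι → K) (hf : f b = 1) : RankOneIdempotent ι K :=
  ⟨Pi.single b 1, f, by rw [dotProduct_single_one, hf]⟩

theorem eq_smul_of_toMatrix_eq {P Q : RankOneIdempotent ι K} (h : P.toMatrix = Q.toMatrix) :
    ∃ c : K, P.vec = c • Q.vec := by
  have := congrArg (· *ᵥ P.vec) h
  simp only [toMatrix, vecMulVec_mulVec, covec_dotProduct_vec] at this
  exact ⟨_, by simpa using this⟩

theorem toMatrix_eq_of_eq_smul {P Q : RankOneIdempotent ι K} {c d : K} (hc : P.vec = c • Q.vec)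
    (hd : P.covec = d • Q.covec) : P.toMatrix = Q.toMatrix := by
  have hcd : c * d = 1 := by
    simpa [hc, hd, Q.covec_dotProduct_vec] using P.covec_dotProduct_vec
  rw [toMatrix, hc, hd, vecMulVec_smul, smul_vecMulVec, smul_smul, mul_comm,
    hcd, one_smul, toMatrix]

variable [DecidableEq ι] {α : Type*} [LinearOrder α] {κ : ι → α}

/-- The idempotent whose range is spanned by the `k`-th column of `S` and whose kernel is spanned
by the other columns. -/
def ofUnit (S : (Matrix ι ι K)ˣ) (k : ι) : RankOneIdempotent ι K :=
  ⟨S.val.col k, S⁻¹.val.row k, by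
    simpa [mul_apply, dotProduct, -coe_units_inv] using congrFun₂ S.inv_mul k k⟩

theorem conjDiagonal_pi_single (S : (Matrix ι ι K)ˣ) (k : ι) (c : K) :
    conjDiagonal S (Pi.single k c) = c • (ofUnit S k).toMatrix := by
  have hc : (Pi.single k c : ι → K) = c • Pi.single k 1 := by simp [← Pi.single_smul']
  rw [hc, map_smul, conjDiagonal_apply, diagonal_single, single_eq_single_vecMulVec_single,
    mul_vecMulVec, vecMulVec_mul, mulVec_single_one, single_one_vecMul]
  rfl

theorem isUnit_intertwiner (P : RankOneIdempotent ι K) {k : ι} (hk : P.covec k * P.vec k ≠ 0) :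
    IsUnit (P.toMatrix * single k k 1 + (1 - P.toMatrix) * (1 - single k k 1)) := by
  set E : Matrix ι ι K := single k k 1
  rw [isUnit_iff_isUnit_det, isUnit_iff_ne_zero, ne_eq, ← exists_mulVec_eq_zero_iff]
  rintro ⟨v, hv, hSv⟩
  have hPE : P.toMatrix * (P.toMatrix * E + (1 - P.toMatrix) * (1 - E)) = P.toMatrix * E := by
    rw [mul_add, ← mul_assoc, ← mul_assoc, mul_one_sub P.toMatrix P.toMatrix, toMatrix_mul_self,
      sub_self, zero_mul, add_zero]
  have hvk : v k = 0 := by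
    have : P.toMatrix *ᵥ (E *ᵥ v) = 0 := by
      rw [mulVec_mulVec, ← hPE, ← mulVec_mulVec, hSv, mulVec_zero]
    have hzero : P.vec k * (v k * P.covec k) = 0 := by
      simpa [E, single_mulVec_eq, toMatrix, vecMulVec_mulVec, -mul_eq_zero] using congrFun this k
    exact (mul_eq_zero.mp (by linear_combination hzero)).resolve_left hk
  have hEv : E *ᵥ v = 0 := by simp [E, single_mulVec_eq, hvk]
  have hvP : v = (P.covec ⬝ᵥ v) • P.vec := by
    have hFv : (1 - E) *ᵥ v = v := by rw [sub_mulVec, one_mulVec, hEv, sub_zero]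
    rw [add_mulVec, ← mulVec_mulVec, ← mulVec_mulVec, hEv, mulVec_zero, zero_add, hFv,
      sub_mulVec, one_mulVec, sub_eq_zero] at hSv
    rwa [← op_smul_eq_smul, ← vecMulVec_mulVec]
  have hc : P.covec ⬝ᵥ v = 0 := by
    have := congrFun hvP k
    rw [hvk, Pi.smul_apply, smul_eq_mul, eq_comm] at this
    exact (mul_eq_zero.mp this).resolve_right (right_ne_zero_of_mul hk)
  exact hv (by rw [hvP, hc, zero_smul])

theorem exists_conjDiagonal_single (P : RankOneIdempotent ι K)
    (hP : P.toMatrix ∈ blockTriangularSubalgebra K K κ) :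
    ∃ S k, (∀ l, conjDiagonal S l ∈ blockTriangularSubalgebra K K κ) ∧
      conjDiagonal S (Pi.single k 1) = P.toMatrix := by
  obtain ⟨k, -, hk⟩ : ∃ k ∈ Finset.univ, P.covec k * P.vec k ≠ 0 :=
    Finset.exists_ne_zero_of_sum_ne_zero (by
      rw [← dotProduct, P.covec_dotProduct_vec]; exact one_ne_zero)
  set R := P.toMatrix
  set E : Matrix ι ι K := single k k 1
  have hR : R * R = R := P.toMatrix_mul_self
  have hE : E * E = E := by simp [E]
  obtain ⟨S, hS⟩ : IsUnit (R * E + (1 - R) * (1 - E)) := P.isUnit_intertwiner hk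
  have hRS : R * S = S * E := by
    rw [hS]
    simp only [mul_add, add_mul, mul_sub, sub_mul, mul_one, one_mul, mul_assoc, hE]
    simp only [← mul_assoc, hR]
    abel
  have hE_mem : E ∈ blockTriangularSubalgebra K K κ := blockTriangular_single le_rfl 1
  have hS_mem : S.val ∈ blockTriangularSubalgebra K K κ := by
    rw [hS]
    exact add_mem (mul_mem hP hE_mem)
      (mul_mem (sub_mem (one_mem _) hP) (sub_mem (one_mem _) hE_mem))
  refine ⟨S, k, fun l => mul_mem (mul_mem hS_mem (blockTriangular_diagonal l))
    (units_inv_mem_blockTriangularSubalgebra hS_mem), ?_⟩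
  rw [conjDiagonal_apply, diagonal_single, ← hRS, mul_assoc, Units.mul_inv, mul_one]

end RankOneIdempotent

end RankOneIdempotents

section Duality

/-- The map `X ↦ φ(Xᵗ)ᵗ`, through which statements about columns follow from those about rows. -/
def transposeConj {ι : Type*} (φ : Matrix ι ι ℂ → Matrix ι ι ℂ) (X : Matrix ι ι ℂ) :
    Matrix ι ι ℂ :=
  (φ Xᵀ)ᵀ

variable {ι : Type*} [Fintype ι] {φ : Matrix ι ι ℂ → Matrix ι ι ℂ}

theorem transposeConj_swap_toMatrix {P Q : RankOneIdempotent ι ℂ} :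
    transposeConj φ P.swap.toMatrix = Q.swap.toMatrix ↔ φ P.toMatrix = Q.toMatrix := by
  rw [transposeConj, P.swap.transpose_toMatrix, ← Q.transpose_toMatrix, transpose_inj]
  rfl

variable [DecidableEq ι] {α : Type*} [LinearOrder α] {κ : ι → α}

theorem transpose_mem_blockTriangularSubalgebra {X : Matrix ι ι ℂ} :
    Xᵀ ∈ blockTriangularSubalgebra ℂ ℂ κ ↔
      X ∈ blockTriangularSubalgebra ℂ ℂ (OrderDual.toDual ∘ κ) :=
  ⟨fun h _ _ hij => h hij, fun h _ _ hij => h hij⟩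

theorem swap_toMatrix_mem_blockTriangularSubalgebra {P : RankOneIdempotent ι ℂ} :
    P.swap.toMatrix ∈ blockTriangularSubalgebra ℂ ℂ (OrderDual.toDual ∘ κ) ↔
      P.toMatrix ∈ blockTriangularSubalgebra ℂ ℂ κ := by
  rw [← transpose_mem_blockTriangularSubalgebra, P.swap.transpose_toMatrix]
  rfl

namespace IsPreserver

protected theorem transposeConj (hφ : IsPreserver (blockTriangularSubalgebra ℂ ℂ κ) φ) :
    IsPreserver (blockTriangularSubalgebra ℂ ℂ (OrderDual.toDual ∘ κ)) (transposeConj φ) where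
  continuousOn := continuous_id.matrix_transpose.comp_continuousOn
    (hφ.continuousOn.comp continuous_id.matrix_transpose.continuousOn
      fun _ => transpose_mem_blockTriangularSubalgebra.mpr)
  injOn X hX Y hY h := transpose_injective (hφ.injOn
    (transpose_mem_blockTriangularSubalgebra.mpr hX)
    (transpose_mem_blockTriangularSubalgebra.mpr hY) (transpose_injective h))
  commute X hX Y hY h := by
    have hcomm : Commute Xᵀ Yᵀ := by
      rw [Commute, SemiconjBy, ← transpose_mul, ← transpose_mul, h.eq]
    exact hφ.transpose.commute _ (transpose_mem_blockTriangularSubalgebra.mpr hX) _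
      (transpose_mem_blockTriangularSubalgebra.mpr hY) hcomm
  spectrum_eq X hX := by
    rw [transposeConj, spectrum_transpose,
      hφ.spectrum_eq _ (transpose_mem_blockTriangularSubalgebra.mpr hX), spectrum_transpose]

end IsPreserver

end Duality

section RankOneImages

variable {ι : Type*} [Fintype ι] [DecidableEq ι] {φ : Matrix ι ι ℂ → Matrix ι ι ℂ}

namespace IsPreserver

theorem orth {𝒜 : Subalgebra ℂ (Matrix ι ι ℂ)} (hφ : IsPreserver 𝒜 φ)
    {P P' Q Q' : RankOneIdempotent ι ℂ} (hP : P.toMatrix ∈ 𝒜) (hP' : P'.toMatrix ∈ 𝒜)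
    (hQ : φ P.toMatrix = Q.toMatrix) (hQ' : φ P'.toMatrix = Q'.toMatrix) (h : P.Orth P') :
    Q.Orth Q' := by
  apply RankOneIdempotent.orth_of_commute
  · rw [← hQ, ← hQ']
    exact hφ.commute _ hP _ hP' h.commute
  · rw [← hQ, ← hQ']
    exact fun heq => h.toMatrix_ne (hφ.injOn hP hP' heq)

variable {α : Type*} [LinearOrder α] {κ : ι → α}

theorem exists_smul_toMatrix (hφ : IsPreserver (blockTriangularSubalgebra ℂ ℂ κ) φ)
    {P : RankOneIdempotent ι ℂ} (hP : P.toMatrix ∈ blockTriangularSubalgebra ℂ ℂ κ) :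
    ∃ Q : RankOneIdempotent ι ℂ, ∀ c : ℂ, φ (c • P.toMatrix) = c • Q.toMatrix := by
  obtain ⟨S, k, hS, hSP⟩ := P.exists_conjDiagonal_single hP
  obtain ⟨T, hT⟩ := hφ.exists_conjDiagonal hS
  exact ⟨.ofUnit T k, fun c => by
    rw [← hSP, ← map_smul, hT, map_smul, RankOneIdempotent.conjDiagonal_pi_single, one_smul]⟩

theorem exists_toMatrix (hφ : IsPreserver (blockTriangularSubalgebra ℂ ℂ κ) φ)
    {P : RankOneIdempotent ι ℂ} (hP : P.toMatrix ∈ blockTriangularSubalgebra ℂ ℂ κ) :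
    ∃ Q : RankOneIdempotent ι ℂ, φ P.toMatrix = Q.toMatrix :=
  (hφ.exists_smul_toMatrix hP).imp fun Q hQ => by simpa only [one_smul] using hQ 1

theorem map_smul_toMatrix (hφ : IsPreserver (blockTriangularSubalgebra ℂ ℂ κ) φ)
    {P : RankOneIdempotent ι ℂ} (hP : P.toMatrix ∈ blockTriangularSubalgebra ℂ ℂ κ) (c : ℂ) :
    φ (c • P.toMatrix) = c • φ P.toMatrix := by
  obtain ⟨Q, hQ⟩ := hφ.exists_smul_toMatrix hP
  rw [hQ, ← one_smul ℂ P.toMatrix, hQ, one_smul]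

end IsPreserver

end RankOneImages

section Fixing

theorem eq_smul_of_forall_dotProduct_eq_zero {ι K : Type*} [Fintype ι] [Field K]
    {x x₁ y f : ι → K} (hfx : f ⬝ᵥ x = 1) (hfx₁ : f ⬝ᵥ x₁ = 0) (hx₁ : x₁ ≠ 0)
    (h : ∀ g, g ⬝ᵥ x = 0 → g ⬝ᵥ x₁ = 1 → g ⬝ᵥ y = 0) : y = (f ⬝ᵥ y) • x := by
  classical
  have hker (j : ι) : (Pi.single j 1 - x j • f) ⬝ᵥ x = 0 := by
    simp [sub_dotProduct, smul_dotProduct, hfx]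
  obtain ⟨i, hi⟩ := Function.ne_iff.mp hx₁
  set a := (x₁ i)⁻¹ • (Pi.single i 1 - x i • f)
  have ha_x : a ⬝ᵥ x = 0 := by rw [smul_dotProduct, hker, smul_zero]
  have ha_x₁ : a ⬝ᵥ x₁ = 1 := by
    simpa [a, smul_dotProduct, sub_dotProduct, hfx₁] using inv_mul_cancel₀ hi
  have hall (g : ι → K) (hg : g ⬝ᵥ x = 0) : g ⬝ᵥ y = 0 := by
    have := h (g + (1 - g ⬝ᵥ x₁) • a) (by simp [add_dotProduct, smul_dotProduct, hg, ha_x])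
      (by simp [add_dotProduct, smul_dotProduct, ha_x₁])
    simpa [add_dotProduct, smul_dotProduct, h a ha_x ha_x₁] using this
  funext j
  have := hall _ (hker j)
  rw [sub_dotProduct, smul_dotProduct, single_one_dotProduct, sub_eq_zero] at this
  rw [this, Pi.smul_apply, smul_eq_mul, smul_eq_mul, mul_comm]

variable {ι : Type*} [Fintype ι] [DecidableEq ι] {α : Type*} [LinearOrder α] {κ : ι → α}
  {φ : Matrix ι ι ℂ → Matrix ι ι ℂ} {b t : ι} {P Q : RankOneIdempotent ι ℂ}

theorem ofRow_toMatrix_mem (hb : ∀ i, κ b ≤ κ i) (f : ι → ℂ) (hf : f b = 1) :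
    (RankOneIdempotent.ofRow b f hf).toMatrix ∈ blockTriangularSubalgebra ℂ ℂ κ := by
  intro i j hij
  have hib : i ≠ b := by rintro rfl; exact (hb j).not_gt hij
  simp [RankOneIdempotent.toMatrix_apply, RankOneIdempotent.ofRow, hib]

theorem ofRow_swap_toMatrix_mem (ht : ∀ i, κ i ≤ κ t) (u : ι → ℂ) (hu : u t = 1) :
    (RankOneIdempotent.ofRow t u hu).swap.toMatrix ∈ blockTriangularSubalgebra ℂ ℂ κ :=
  swap_toMatrix_mem_blockTriangularSubalgebra.mp (ofRow_toMatrix_mem ht u hu)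

/-- The map `φ` fixes every rank-one idempotent supported on row `b`. -/
def FixesRow (b : ι) (φ : Matrix ι ι ℂ → Matrix ι ι ℂ) : Prop :=
  ∀ f hf, φ (RankOneIdempotent.ofRow b f hf).toMatrix = (RankOneIdempotent.ofRow b f hf).toMatrix

namespace IsPreserver

theorem exists_vec_eq_smul_of_covec_eq_zero
    (hφ : IsPreserver (blockTriangularSubalgebra ℂ ℂ κ) φ) (hb : ∀ i, κ b ≤ κ i)
    (hrow : FixesRow b φ) (hP : P.toMatrix ∈ blockTriangularSubalgebra ℂ ℂ κ)
    (hQ : φ P.toMatrix = Q.toMatrix) (hPb : P.covec b = 0) : ∃ c : ℂ, Q.vec = c • P.vec := by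
  refine ⟨_, eq_smul_of_forall_dotProduct_eq_zero (x₁ := Pi.single b 1) P.covec_dotProduct_vec
    (by simpa using hPb) (by simp) fun f hfx hfb => ?_⟩
  rw [dotProduct_single_one] at hfb
  exact (hφ.orth hP (ofRow_toMatrix_mem hb f hfb) hQ (hrow f hfb)
    ⟨by simpa [RankOneIdempotent.ofRow] using hPb, hfx⟩).2

theorem exists_covec_eq_smul_of_vec_eq_zero
    (hφ : IsPreserver (blockTriangularSubalgebra ℂ ℂ κ) φ) (ht : ∀ i, κ i ≤ κ t)
    (hcol : FixesRow t (transposeConj φ)) (hP : P.toMatrix ∈ blockTriangularSubalgebra ℂ ℂ κ)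
    (hQ : φ P.toMatrix = Q.toMatrix) (hPt : P.vec t = 0) : ∃ c : ℂ, Q.covec = c • P.covec :=
  hφ.transposeConj.exists_vec_eq_smul_of_covec_eq_zero ht hcol
    (swap_toMatrix_mem_blockTriangularSubalgebra.mpr hP) (transposeConj_swap_toMatrix.mpr hQ) hPt

-- The idempotents `(x₁, g)` orthogonal to `P`, where `x₁` is supported on the lowest block and
-- `x₁ t = 0`, have images whose row is known.
theorem exists_vec_eq_smul_of_le (hφ : IsPreserver (blockTriangularSubalgebra ℂ ℂ κ) φ)
    (hb : ∀ i, κ b ≤ κ i) (ht : ∀ i, κ i ≤ κ t) (hbt : b ≠ t)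
    (hcol : FixesRow t (transposeConj φ)) (hP : P.toMatrix ∈ blockTriangularSubalgebra ℂ ℂ κ)
    (hQ : φ P.toMatrix = Q.toMatrix) (hPb : P.covec b ≠ 0) {k : ι} (hkb : k ≠ b) (hkt : k ≠ t)
    (hk : κ k ≤ κ b) : ∃ c : ℂ, Q.vec = c • P.vec := by
  set x₁ : ι → ℂ := P.covec k • Pi.single b 1 - P.covec b • Pi.single k 1 with hx₁
  have hx₁_ne : x₁ ≠ 0 := fun h => hPb (by simpa [hx₁, hkb] using congrFun h k)
  have hx₁_t : x₁ t = 0 := by simp [hx₁, hbt.symm, hkt.symm]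
  have hPx₁ : P.covec ⬝ᵥ x₁ = 0 := by simp [hx₁, dotProduct_sub, mul_comm]
  refine ⟨_, eq_smul_of_forall_dotProduct_eq_zero P.covec_dotProduct_vec hPx₁ hx₁_ne
    fun g hgx hgx₁ => ?_⟩
  let P₁ : RankOneIdempotent ι ℂ := ⟨x₁, g, hgx₁⟩
  have hP₁ : P₁.toMatrix ∈ blockTriangularSubalgebra ℂ ℂ κ := by
    intro i j hij
    have hib : i ≠ b := by rintro rfl; exact (hb j).not_gt hij
    have hik : i ≠ k := by rintro rfl; exact (hk.trans (hb j)).not_gt hij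
    simp [RankOneIdempotent.toMatrix_apply, P₁, hx₁, hib, hik]
  obtain ⟨Q₁, hQ₁⟩ := hφ.exists_toMatrix hP₁
  obtain ⟨c, hc⟩ := hφ.exists_covec_eq_smul_of_vec_eq_zero ht hcol hP₁ hQ₁ hx₁_t
  have hc_ne : c ≠ 0 := fun h => Q₁.covec_ne_zero (by rw [hc, h, zero_smul])
  have := (hφ.orth hP hP₁ hQ hQ₁ ⟨hPx₁, hgx⟩).2
  rw [hc, smul_dotProduct, smul_eq_mul] at this
  exact (mul_eq_zero.mp this).resolve_left hc_ne

theorem exists_vec_eq_smul_of_lt (hrow : FixesRow b φ)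
    (hP : P.toMatrix ∈ blockTriangularSubalgebra ℂ ℂ κ) (hQ : φ P.toMatrix = Q.toMatrix)
    (hPb : P.covec b ≠ 0) (hlt : ∀ i, i ≠ b → κ b < κ i) : ∃ c : ℂ, Q.vec = c • P.vec := by
  have hx : P.vec = Pi.single b (P.vec b) := by
    funext i
    rcases eq_or_ne i b with rfl | hi
    · simp
    · simpa [hi] using (mul_eq_zero.mp (hP (hlt i hi))).resolve_right hPb
  have hPb' : P.covec b * P.vec b = 1 := by
    have := P.covec_dotProduct_vec
    rwa [hx, dotProduct_single] at this
  have hrow_eq : P.toMatrix =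
      (RankOneIdempotent.ofRow b (P.vec b • P.covec)
        (by simpa [mul_comm] using hPb')).toMatrix := by
    rw [RankOneIdempotent.toMatrix, RankOneIdempotent.toMatrix, RankOneIdempotent.ofRow,
      vecMulVec_smul, ← smul_vecMulVec, ← Pi.single_smul', smul_eq_mul, mul_one, ← hx]
  apply RankOneIdempotent.eq_smul_of_toMatrix_eq
  rw [← hQ, hrow_eq, hrow]

theorem exists_vec_eq_smul (hφ : IsPreserver (blockTriangularSubalgebra ℂ ℂ κ) φ)
    (hb : ∀ i, κ b ≤ κ i) (ht : ∀ i, κ i ≤ κ t) (hbt : b ≠ t) (hm : ∃ m, m ≠ b ∧ m ≠ t)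
    (hrow : FixesRow b φ) (hcol : FixesRow t (transposeConj φ))
    (hP : P.toMatrix ∈ blockTriangularSubalgebra ℂ ℂ κ) (hQ : φ P.toMatrix = Q.toMatrix) :
    ∃ c : ℂ, Q.vec = c • P.vec := by
  by_cases hPb : P.covec b = 0
  · exact hφ.exists_vec_eq_smul_of_covec_eq_zero hb hrow hP hQ hPb
  by_cases! hk : ∃ k, k ≠ b ∧ k ≠ t ∧ κ k ≤ κ b
  · obtain ⟨k, hkb, hkt, hk⟩ := hk
    exact hφ.exists_vec_eq_smul_of_le hb ht hbt hcol hP hQ hPb hkb hkt hk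
  · obtain ⟨m, hmb, hmt⟩ := hm
    refine exists_vec_eq_smul_of_lt hrow hP hQ hPb fun i hi => ?_
    rcases eq_or_ne i t with rfl | hit
    · exact (hk m hmb hmt).trans_le (ht m)
    · exact hk i hi hit

theorem apply_toMatrix_of_fixesRow (hφ : IsPreserver (blockTriangularSubalgebra ℂ ℂ κ) φ)
    (hb : ∀ i, κ b ≤ κ i) (ht : ∀ i, κ i ≤ κ t) (hbt : b ≠ t) (hm : ∃ m, m ≠ b ∧ m ≠ t)
    (hrow : FixesRow b φ) (hcol : FixesRow t (transposeConj φ))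
    (hP : P.toMatrix ∈ blockTriangularSubalgebra ℂ ℂ κ) : φ P.toMatrix = P.toMatrix := by
  obtain ⟨Q, hQ⟩ := hφ.exists_toMatrix hP
  obtain ⟨c, hc⟩ := hφ.exists_vec_eq_smul hb ht hbt hm hrow hcol hP hQ
  obtain ⟨d, hd⟩ := hφ.transposeConj.exists_vec_eq_smul (P := P.swap) (Q := Q.swap) ht hb hbt.symm
    (by simpa only [and_comm] using hm) hcol hrow
    (swap_toMatrix_mem_blockTriangularSubalgebra.mpr hP) (transposeConj_swap_toMatrix.mpr hQ)
  rw [hQ, RankOneIdempotent.toMatrix_eq_of_eq_smul hc hd]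

theorem eqOn_id_of_fixesRow (hφ : IsPreserver (blockTriangularSubalgebra ℂ ℂ κ) φ)
    (hb : ∀ i, κ b ≤ κ i) (ht : ∀ i, κ i ≤ κ t) (hbt : b ≠ t) (hm : ∃ m, m ≠ b ∧ m ≠ t)
    (hrow : FixesRow b φ) (hcol : FixesRow t (transposeConj φ)) :
    Set.EqOn φ id (blockTriangularSubalgebra ℂ ℂ κ) := by
  have hdense (X : Matrix ι ι ℂ) (hX : X ∈ blockTriangularSubalgebra ℂ ℂ κ) :=
    mem_closure_conjDiagonal (fun l => blockTriangular_diagonal l) hX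
  refine Set.EqOn.of_subset_closure ?_ hφ.continuousOn continuousOn_id
    (fun _ hY => hY.1) hdense
  rintro _ ⟨hY, S, d, hd, rfl⟩
  have hS := conjDiagonal_mem hd hY
  obtain ⟨T, hT⟩ := hφ.exists_conjDiagonal hS
  have hST : (conjDiagonal S).toLinearMap = (conjDiagonal T).toLinearMap := by
    refine LinearMap.pi_ext' fun k => LinearMap.ext_ring ?_
    have hk : (RankOneIdempotent.ofUnit S k).toMatrix = conjDiagonal S (Pi.single k 1) := by
      rw [RankOneIdempotent.conjDiagonal_pi_single, one_smul]
    change conjDiagonal S (Pi.single k 1) = conjDiagonal T (Pi.single k 1)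
    rw [← hT, ← hk, hφ.apply_toMatrix_of_fixesRow hb ht hbt hm hrow hcol (hk ▸ hS _)]
  exact (hT d).trans (LinearMap.congr_fun hST d).symm

end IsPreserver

end Fixing

section Shears

variable {ι : Type*} [DecidableEq ι]

/-- The map `φ` fixes every diagonal matrix. -/
def FixesDiagonal (φ : Matrix ι ι ℂ → Matrix ι ι ℂ) : Prop :=
  ∀ l, φ (diagonal l) = diagonal l

variable {φ : Matrix ι ι ℂ → Matrix ι ι ℂ}

theorem FixesDiagonal.transpose (hφ : FixesDiagonal φ) : FixesDiagonal fun X => (φ X)ᵀ := by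
  intro l
  beta_reduce
  rw [hφ, diagonal_transpose]

theorem FixesDiagonal.transposeConj (hφ : FixesDiagonal φ) : FixesDiagonal (transposeConj φ) :=
  fun l => by rw [_root_.transposeConj, diagonal_transpose, hφ, diagonal_transpose]

variable [Fintype ι]

namespace RankOneIdempotent

/-- The diagonal matrix unit at `k`. -/
def coord (k : ι) : RankOneIdempotent ι ℂ := ofRow k (Pi.single k 1) (Pi.single_eq_same k 1)

theorem coord_toMatrix (k : ι) : (coord k).toMatrix = diagonal (Pi.single k 1) := by
  rw [diagonal_single, single_eq_single_vecMulVec_single]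
  rfl

/-- The conjugate of the diagonal matrix unit at `j` by the elementary matrix `1 - s E_bj`. -/
def shear {b j : ι} (hj : j ≠ b) (s : ℂ) : RankOneIdempotent ι ℂ :=
  ⟨Pi.single j 1 - s • Pi.single b 1, Pi.single j 1, by simp [hj.symm]⟩

variable {b j : ι} {hj : j ≠ b}

theorem shear_zero : shear hj 0 = coord j := by
  simp [shear, coord, ofRow]

theorem shear_toMatrix_injective (hj : j ≠ b) :
    Function.Injective fun s => (shear hj s).toMatrix := fun s s' h => by
  simpa [shear, toMatrix_apply, hj.symm] using congrFun₂ h b j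

theorem exists_shear_of_covec_eq_zero {Q : RankOneIdempotent ι ℂ} (hj : j ≠ b)
    (hQ : ∀ k, k ≠ b → k ≠ j → Q.vec k = 0 ∧ Q.covec k = 0) (hb : Q.covec b = 0) :
    ∃ s, Q.toMatrix = (shear hj s).toMatrix := by
  have hcovec : Q.covec = Q.covec j • Pi.single j 1 := by
    funext k
    rcases eq_or_ne k j with rfl | hkj
    · simp
    · rcases eq_or_ne k b with rfl | hkb
      · simp [hb, hkj]
      · simp [(hQ k hkb hkj).2, hkj]
  have hone : Q.covec j * Q.vec j = 1 := by
    have := Q.covec_dotProduct_vec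
    rwa [hcovec, smul_dotProduct, single_one_dotProduct] at this
  refine ⟨-(Q.vec b * Q.covec j), toMatrix_eq_of_eq_smul (c := Q.vec j) ?_ hcovec⟩
  funext k
  rcases eq_or_ne k j with rfl | hkj
  · simp [shear, hj]
  · rcases eq_or_ne k b with rfl | hkb
    · simp only [shear, Pi.smul_apply, Pi.sub_apply, Pi.single_eq_same, Pi.single_eq_of_ne hkj,
        smul_eq_mul]
      linear_combination -Q.vec k * hone
    · simp [shear, (hQ k hkb hkj).1, hkj, hkb]

end RankOneIdempotent

open RankOneIdempotent

variable {α : Type*} [LinearOrder α] {κ : ι → α} {b j l : ι}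

theorem FixesDiagonal.apply_coord (hφ : FixesDiagonal φ) (k : ι) :
    φ (coord k).toMatrix = (coord k).toMatrix := by
  rw [coord_toMatrix, hφ]

theorem coord_toMatrix_mem (k : ι) : (coord k).toMatrix ∈ blockTriangularSubalgebra ℂ ℂ κ :=
  coord_toMatrix k ▸ blockTriangular_diagonal _

theorem shear_toMatrix_mem (hb : ∀ i, κ b ≤ κ i) (hj : j ≠ b) (s : ℂ) :
    (shear hj s).toMatrix ∈ blockTriangularSubalgebra ℂ ℂ κ := by
  intro i k hik
  have hib : i ≠ b := by rintro rfl; exact (hb k).not_gt hik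
  rcases eq_or_ne k j with rfl | hkj
  · have hik' : i ≠ k := by rintro rfl; exact hik.false
    simp [toMatrix_apply, shear, hib, hik']
  · simp [toMatrix_apply, shear, hkj]

namespace IsPreserver

theorem vec_covec_eq_zero (hφ : IsPreserver (blockTriangularSubalgebra ℂ ℂ κ) φ)
    (hdiag : FixesDiagonal φ) {P Q : RankOneIdempotent ι ℂ}
    (hP : P.toMatrix ∈ blockTriangularSubalgebra ℂ ℂ κ) (hQ : φ P.toMatrix = Q.toMatrix) {k : ι}
    (hvec : P.vec k = 0) (hcovec : P.covec k = 0) : Q.vec k = 0 ∧ Q.covec k = 0 := by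
  have := hφ.orth hP (coord_toMatrix_mem k) hQ (hdiag.apply_coord k)
    ⟨by simpa [coord, ofRow] using hcovec, by simpa [coord, ofRow] using hvec⟩
  simpa [Orth, coord, ofRow, and_comm] using this

theorem vec_covec_eq_zero_of_shear (hφ : IsPreserver (blockTriangularSubalgebra ℂ ℂ κ) φ)
    (hb : ∀ i, κ b ≤ κ i) (hdiag : FixesDiagonal φ) {hj : j ≠ b} {s : ℂ} {Q : RankOneIdempotent ι ℂ}
    (hQ : φ (shear hj s).toMatrix = Q.toMatrix) (k : ι) (hkb : k ≠ b) (hkj : k ≠ j) :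
    Q.vec k = 0 ∧ Q.covec k = 0 :=
  hφ.vec_covec_eq_zero hdiag (shear_toMatrix_mem hb hj s) hQ (by simp [shear, hkb, hkj])
    (by simp [shear, hkj])

theorem vec_ne_zero_or_covec_ne_zero (hφ : IsPreserver (blockTriangularSubalgebra ℂ ℂ κ) φ)
    (hb : ∀ i, κ b ≤ κ i) (hdiag : FixesDiagonal φ) {hj : j ≠ b} {s : ℂ} (hs : s ≠ 0)
    {Q : RankOneIdempotent ι ℂ} (hQ : φ (shear hj s).toMatrix = Q.toMatrix) :
    Q.vec b ≠ 0 ∨ Q.covec b ≠ 0 := by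
  by_contra! h
  have hzero (k : ι) (hkj : k ≠ j) : Q.vec k = 0 ∧ Q.covec k = 0 := by
    rcases eq_or_ne k b with rfl | hkb
    · exact h
    · exact hφ.vec_covec_eq_zero_of_shear hb hdiag hQ k hkb hkj
  have hQj : Q.toMatrix = (shear hj 0).toMatrix := by
    rw [shear_zero]
    refine toMatrix_eq_of_eq_smul (c := Q.vec j) (d := Q.covec j) ?_ ?_ <;>
    · funext k
      rcases eq_or_ne k j with rfl | hkj
      · simp [coord, ofRow]
      · simp [coord, ofRow, hzero k hkj, hkj]
  refine hs (shear_toMatrix_injective hj (hφ.injOn (shear_toMatrix_mem hb hj s)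
    (shear_toMatrix_mem hb hj 0) ?_))
  simp only
  rw [hQ, hQj, shear_zero, hdiag.apply_coord]

theorem covec_mul_vec_eq_zero (hφ : IsPreserver (blockTriangularSubalgebra ℂ ℂ κ) φ)
    (hb : ∀ i, κ b ≤ κ i) (hdiag : FixesDiagonal φ) {hj : j ≠ b} {hl : l ≠ b} {s s' : ℂ}
    {Q R : RankOneIdempotent ι ℂ} (hQ : φ (shear hj s).toMatrix = Q.toMatrix)
    (hR : φ (shear hl s').toMatrix = R.toMatrix) (hjl : j ≠ l) : Q.covec b * R.vec b = 0 := by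
  have horth := hφ.orth (shear_toMatrix_mem hb hj s) (shear_toMatrix_mem hb hl s') hQ hR
    ⟨by simp [shear, hj, hjl], by simp [shear, hl, hjl.symm]⟩
  rw [← horth.1, dotProduct, eq_comm]
  refine Finset.sum_eq_single b (fun k _ hkb => ?_) (by simp)
  rcases eq_or_ne k j with rfl | hkj
  · rw [(hφ.vec_covec_eq_zero_of_shear hb hdiag hR k hkb hjl).1, mul_zero]
  · rw [(hφ.vec_covec_eq_zero_of_shear hb hdiag hQ k hkb hkj).2, zero_mul]

theorem covec_eq_zero_of_vec_ne_zero (hφ : IsPreserver (blockTriangularSubalgebra ℂ ℂ κ) φ)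
    (hb : ∀ i, κ b ≤ κ i) (hdiag : FixesDiagonal φ) (hthird : ∃ k, k ≠ b ∧ k ≠ j)
    {hj : j ≠ b} {hl : l ≠ b} {s s' : ℂ} {Q R : RankOneIdempotent ι ℂ}
    (hQ : φ (shear hj s).toMatrix = Q.toMatrix) (hR : φ (shear hl s').toMatrix = R.toMatrix)
    (hQb : Q.vec b ≠ 0) : R.covec b = 0 := by
  rcases ne_or_eq l j with hlj | rfl
  · exact (mul_eq_zero.mp (hφ.covec_mul_vec_eq_zero hb hdiag hR hQ hlj)).resolve_right hQb
  obtain ⟨k, hkb, hkl⟩ := hthird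
  obtain ⟨U, hU⟩ := hφ.exists_toMatrix (shear_toMatrix_mem hb hkb 1)
  have hUb : U.covec b = 0 :=
    (mul_eq_zero.mp (hφ.covec_mul_vec_eq_zero hb hdiag hU hQ hkl)).resolve_right hQb
  have hUb' : U.vec b ≠ 0 :=
    (hφ.vec_ne_zero_or_covec_ne_zero hb hdiag one_ne_zero hU).resolve_right (not_not.mpr hUb)
  exact (mul_eq_zero.mp (hφ.covec_mul_vec_eq_zero hb hdiag hR hU hkl.symm)).resolve_right hUb'

end IsPreserver

/-- The map `φ` permutes the shears into row `b`, acting by `ρ j` on the parameter of those in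
column `j`. The value `ρ b = id` is a convention that lets `ρ` act on all coordinates of a row. -/
structure MapsShears (b : ι) (ρ : ι → ℂ → ℂ) (φ : Matrix ι ι ℂ → Matrix ι ι ℂ) : Prop where
  apply_self : ρ b = id
  apply_shear {j : ι} (hj : j ≠ b) (s : ℂ) :
    φ (shear hj s).toMatrix = (shear hj (ρ j s)).toMatrix

namespace MapsShears

variable {ρ : ι → ℂ → ℂ}

theorem apply_eq_zero_iff (hρ : MapsShears b ρ φ)
    (hφ : IsPreserver (blockTriangularSubalgebra ℂ ℂ κ) φ) (hb : ∀ i, κ b ≤ κ i)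
    (hdiag : FixesDiagonal φ) (j : ι) {s : ℂ} : ρ j s = 0 ↔ s = 0 := by
  rcases eq_or_ne j b with rfl | hj
  · rw [hρ.apply_self, id]
  have hzero : φ (shear hj 0).toMatrix = (shear hj 0).toMatrix := by
    rw [shear_zero, hdiag.apply_coord]
  have hinj := hφ.injOn.eq_iff (shear_toMatrix_mem hb hj s) (shear_toMatrix_mem hb hj 0)
  rw [hρ.apply_shear, hzero] at hinj
  exact (shear_toMatrix_injective hj).eq_iff.symm.trans
    (hinj.trans (shear_toMatrix_injective hj).eq_iff)

theorem apply_row (hρ : MapsShears b ρ φ) (hφ : IsPreserver (blockTriangularSubalgebra ℂ ℂ κ) φ)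
    (hb : ∀ i, κ b ≤ κ i) (f : ι → ℂ) (hf : f b = 1) :
    φ (ofRow b f hf).toMatrix =
      (ofRow b (fun j => ρ j (f j)) (by rw [hρ.apply_self, hf, id])).toMatrix := by
  obtain ⟨Q, hQ⟩ := hφ.exists_toMatrix (ofRow_toMatrix_mem hb f hf)
  have horth (j : ι) (hj : j ≠ b) : Q.covec j = Q.covec b * ρ j (f j) ∧ Q.vec j = 0 := by
    have := hφ.orth (ofRow_toMatrix_mem hb f hf) (shear_toMatrix_mem hb hj (f j)) hQ
      (hρ.apply_shear hj (f j))
      ⟨by simp [ofRow, shear, dotProduct_sub, hf], by simp [ofRow, shear, hj]⟩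
    simpa [Orth, shear, dotProduct_sub, sub_eq_zero, mul_comm] using this
  rw [hQ]
  refine toMatrix_eq_of_eq_smul (c := Q.vec b) (d := Q.covec b) ?_ ?_ <;> funext j <;>
    rcases eq_or_ne j b with rfl | hj
  · simp [ofRow]
  · simp [ofRow, hj, (horth j hj).2]
  · simp [ofRow, hρ.apply_self, hf]
  · simp [ofRow, (horth j hj).1]

end MapsShears

namespace IsPreserver

theorem exists_mapsShears (hφ : IsPreserver (blockTriangularSubalgebra ℂ ℂ κ) φ)
    (hb : ∀ i, κ b ≤ κ i) (hdiag : FixesDiagonal φ)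
    (hcovec : ∀ {j : ι} (hj : j ≠ b) (s : ℂ) (Q : RankOneIdempotent ι ℂ),
      φ (shear hj s).toMatrix = Q.toMatrix → Q.covec b = 0) :
    ∃ ρ, MapsShears b ρ φ := by
  have hshear (j : ι) (hj : j ≠ b) (s : ℂ) :
      ∃ s', φ (shear hj s).toMatrix = (shear hj s').toMatrix := by
    obtain ⟨Q, hQ⟩ := hφ.exists_toMatrix (shear_toMatrix_mem hb hj s)
    rw [hQ]
    exact exists_shear_of_covec_eq_zero hj (hφ.vec_covec_eq_zero_of_shear hb hdiag hQ)
      (hcovec hj s Q hQ)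
  choose ρ hρ using hshear
  refine ⟨fun j => if hj : j ≠ b then ρ j hj else id, by simp, fun {j} hj s => ?_⟩
  rw [hρ j hj s, dif_pos hj]

theorem exists_mapsShears_or (hφ : IsPreserver (blockTriangularSubalgebra ℂ ℂ κ) φ)
    (hb : ∀ i, κ b ≤ κ i) (hdiag : FixesDiagonal φ) (hthird : ∀ j, ∃ k, k ≠ b ∧ k ≠ j) :
    (∃ ρ, MapsShears b ρ φ) ∨ ∃ ρ, MapsShears b ρ fun X => (φ X)ᵀ := by
  by_cases! h : ∃ (j : ι) (hj : j ≠ b) (s : ℂ) (Q : RankOneIdempotent ι ℂ),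
      φ (shear hj s).toMatrix = Q.toMatrix ∧ Q.vec b ≠ 0
  · obtain ⟨j, hj, s, Q, hQ, hQb⟩ := h
    exact Or.inl (hφ.exists_mapsShears hb hdiag fun _ _ _ hR =>
      hφ.covec_eq_zero_of_vec_ne_zero hb hdiag (hthird j) hQ hR hQb)
  · refine Or.inr (hφ.transpose.exists_mapsShears hb hdiag.transpose fun hj s Q hQ => ?_)
    refine h _ hj s Q.swap ?_
    rw [← Q.transpose_toMatrix, ← hQ, transpose_transpose]

end IsPreserver

theorem MapsShears.exists_transposeConj {ρ : ι → ℂ → ℂ} (hρ : MapsShears b ρ φ)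
    (hφ : IsPreserver (blockTriangularSubalgebra ℂ ℂ κ) φ)
    (hb : ∀ i, κ b ≤ κ i) {t : ι} (ht : ∀ i, κ i ≤ κ t) (hbt : b ≠ t) (hm : ∃ m, m ≠ b ∧ m ≠ t)
    (hdiag : FixesDiagonal φ) : ∃ γ, MapsShears t γ (transposeConj φ) := by
  have hf : (Pi.single b 1 - Pi.single t 1 : ι → ℂ) b = 1 := by simp [hbt]
  have hrow := transposeConj_swap_toMatrix.mpr (hρ.apply_row hφ hb _ hf)
  have hshear : (ofRow b _ hf).swap = shear hbt 1 := by simp [RankOneIdempotent.swap, ofRow, shear]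
  rw [hshear] at hrow
  refine hφ.transposeConj.exists_mapsShears ht hdiag.transposeConj fun _ _ _ hR =>
    hφ.transposeConj.covec_eq_zero_of_vec_ne_zero ht hdiag.transposeConj
      (by simpa only [and_comm] using hm) hrow hR ?_
  rw [ne_eq, RankOneIdempotent.swap, ofRow, hρ.apply_eq_zero_iff hφ hb hdiag]
  simp [hbt]

end Shears

section Coefficients

open Filter Topology

/-- Coordinatewise maps `ρ` on rows normalized at `b` and `γ` on columns normalized at `t` that
together preserve the vanishing of the pairing `f ⬝ᵥ u`. -/
structure IsOrthPair {ι K : Type*} [Fintype ι] [Field K] (b t : ι) (ρ γ : ι → K → K) : Prop where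
  left_id : ρ b = id
  right_id : γ t = id
  left_zero (j : ι) : ρ j 0 = 0
  right_zero (j : ι) : γ j 0 = 0
  dotProduct_eq_zero {f u : ι → K} : f b = 1 → u t = 1 → f ⬝ᵥ u = 0 →
    (fun j => ρ j (f j)) ⬝ᵥ (fun j => γ j (u j)) = 0

namespace IsOrthPair

variable {ι K : Type*} [Fintype ι] [Field K] {b t k : ι} {ρ γ : ι → K → K}

theorem three_term (h : IsOrthPair b t ρ γ) (hbt : b ≠ t) (hkb : k ≠ b) (hkt : k ≠ t)
    {u w p q : K} (hsum : u + w + p * q = 0) : ρ t u + γ b w + ρ k p * γ k q = 0 := by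
  classical
  have hmap (σ : ι → K → K) (hσ : ∀ j, σ j 0 = 0) {i j : ι} (hij : i ≠ j) (hki : k ≠ i)
      (hkj : k ≠ j) (x y z : K) :
      (fun l => σ l ((Pi.single i x + Pi.single j y + Pi.single k z : ι → K) l)) =
        Pi.single i (σ i x) + Pi.single j (σ j y) + Pi.single k (σ k z) := by
    funext l
    by_cases hli : l = i
    · subst hli; simp [hij, hki.symm]
    by_cases hlj : l = j
    · subst hlj; simp [hij.symm, hkj.symm]
    by_cases hlk : l = k
    · subst hlk; simp [hki, hkj]
    simp [hli, hlj, hlk, hσ]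
  have hdot := h.dotProduct_eq_zero (f := Pi.single b 1 + Pi.single t u + Pi.single k p)
    (u := Pi.single t 1 + Pi.single b w + Pi.single k q) (by simp [hbt, hkb.symm])
    (by simp [hbt.symm, hkt.symm]) (by
      simpa [add_dotProduct, hbt, hbt.symm, hkb, hkb.symm, hkt, hkt.symm] using hsum)
  rw [hmap ρ h.left_zero hbt hkb hkt, hmap γ h.right_zero hbt.symm hkt hkb, h.left_id,
    h.right_id] at hdot
  simpa [add_dotProduct, hbt, hbt.symm, hkb, hkb.symm, hkt, hkt.symm] using hdot

theorem right_neg (h : IsOrthPair b t ρ γ) (hbt : b ≠ t) (hkb : k ≠ b) (hkt : k ≠ t) (x : K) :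
    γ b (-x) = -ρ t x := by
  have := h.three_term hbt hkb hkt (w := -x) (u := x) (p := 0) (q := 0) (by ring)
  rw [h.left_zero k] at this
  linear_combination this

theorem left_mul (h : IsOrthPair b t ρ γ) (hbt : b ≠ t) (hkb : k ≠ b) (hkt : k ≠ t) (p q : K) :
    ρ t (p * q) = ρ k p * γ k q := by
  have := h.three_term hbt hkb hkt (w := -(p * q)) (u := 0) (p := p) (q := q) (by ring)
  rw [h.right_neg hbt hkb hkt, h.left_zero t] at this
  linear_combination -this

theorem left_add (h : IsOrthPair b t ρ γ) (hbt : b ≠ t) (hkb : k ≠ b) (hkt : k ≠ t) (x y : K) :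
    ρ t (x + y) = ρ t x + ρ t y := by
  have := h.three_term hbt hkb hkt (w := -(x + y)) (u := x) (p := y) (q := 1) (by ring)
  rw [h.right_neg hbt hkb hkt, ← h.left_mul hbt hkb hkt, mul_one] at this
  linear_combination -this

theorem apply_mul_apply (h : IsOrthPair b t ρ γ) (hbt : b ≠ t) (hm : ∃ m, m ≠ b ∧ m ≠ t)
    {c : K} (hc : ∀ x, ρ t x = c * x) (j : ι) (p q : K) : ρ j p * γ j q = c * (p * q) := by
  rcases eq_or_ne j t with rfl | hjt
  · rw [h.right_id, hc, id, mul_assoc]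
  rcases eq_or_ne j b with rfl | hjb
  · obtain ⟨m, hmb, hmt⟩ := hm
    rw [h.left_id, ← neg_neg q, h.right_neg hbt hmb hmt, hc, id]
    ring
  · rw [← h.left_mul hbt hjb hjt, hc]

theorem left_apply (h : IsOrthPair b t ρ γ) (hbt : b ≠ t) (hm : ∃ m, m ≠ b ∧ m ≠ t) {c : K}
    (hc₀ : c ≠ 0) (hc : ∀ x, ρ t x = c * x) (j : ι) (x : K) : ρ j x = ρ j 1 * x := by
  have h₁ := h.apply_mul_apply hbt hm hc j 1 1
  refine mul_right_cancel₀ (b := γ j 1) (fun hγ => hc₀ ?_) ?_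
  · simpa [hγ] using h₁.symm
  · rw [h.apply_mul_apply hbt hm hc, mul_right_comm, h₁]
    ring

end IsOrthPair

theorem addMonoidHom_apply_eq_mul_of_tendsto {𝕜 : Type*} [RCLike 𝕜] (ρ : 𝕜 →+ 𝕜) {c L : 𝕜}
    (h : Tendsto (fun z => z * ρ (c / z)) (𝓝[≠] 0) (𝓝 L)) : ρ c = c * ρ 1 := by
  rcases eq_or_ne c 0 with rfl | hc
  · simp
  have heq {a : 𝕜} (ha : a ≠ 0) : a * ρ (c / a) = L := by
    have hseq : Tendsto (fun n : ℕ => a * ((n : 𝕜) + 1)⁻¹) atTop (𝓝[≠] 0) := by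
      refine tendsto_nhdsWithin_iff.mpr ⟨?_, .of_forall fun n => ?_⟩
      · simpa [one_div] using
          (tendsto_one_div_add_atTop_nhds_zero_nat (𝕜 := 𝕜)).const_mul a
      · exact mul_ne_zero ha (inv_ne_zero (Nat.cast_add_one_ne_zero n))
    refine tendsto_nhds_unique (tendsto_const_nhds.congr fun n => ?_) (h.comp hseq)
    have hn : (n : 𝕜) + 1 ≠ 0 := Nat.cast_add_one_ne_zero n
    have hdiv : c / (a * ((n : 𝕜) + 1)⁻¹) = (n + 1) • (c / a) := by
      rw [nsmul_eq_mul, Nat.cast_add_one]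
      field_simp
    rw [Function.comp_apply, hdiv, map_nsmul, nsmul_eq_mul, Nat.cast_add_one]
    field_simp
  have h₁ := heq one_ne_zero
  have hc' := heq hc
  rw [div_one, one_mul] at h₁
  rw [h₁, ← hc', div_self hc]

open RankOneIdempotent

variable {ι : Type*} [Fintype ι] [DecidableEq ι] {α : Type*} [LinearOrder α] {κ : ι → α}
  {φ : Matrix ι ι ℂ → Matrix ι ι ℂ} {b t j : ι} {ρ γ : ι → ℂ → ℂ}

namespace MapsShears

theorem tendsto (hρ : MapsShears b ρ φ) (hφ : IsPreserver (blockTriangularSubalgebra ℂ ℂ κ) φ)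
    (hb : ∀ i, κ b ≤ κ i) (hj : j ≠ b) (c : ℂ) :
    Tendsto (fun z => z * ρ j (c / z)) (𝓝[≠] 0) (𝓝 (φ (single b j c) b j)) := by
  set X : ℂ → Matrix ι ι ℂ := fun z => z • single b b 1 + single b j c
  have hX_mem (z : ℂ) : X z ∈ blockTriangularSubalgebra ℂ ℂ κ :=
    add_mem (Subalgebra.smul_mem _ (blockTriangular_single le_rfl 1) z)
      (blockTriangular_single (hb j) c)
  have hX : Continuous X := by fun_prop
  have hφX : Continuous fun z => φ (X z) b j :=
    (hφ.continuousOn.comp_continuous hX hX_mem).matrix_elem b j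
  have hφX_apply {z : ℂ} (hz : z ≠ 0) : φ (X z) b j = z * ρ j (c / z) := by
    have hf : (Pi.single b 1 + (c / z) • Pi.single j 1 : ι → ℂ) b = 1 := by simp [hj.symm]
    have hXz : X z = z • (ofRow b _ hf).toMatrix := by
      rw [toMatrix, ofRow, vecMulVec_add, vecMulVec_smul, ← single_eq_single_vecMulVec_single,
        ← single_eq_single_vecMulVec_single, smul_add, smul_smul, mul_div_cancel₀ _ hz,
        smul_single c, smul_eq_mul, mul_one]
    rw [hXz, hφ.map_smul_toMatrix (ofRow_toMatrix_mem hb _ hf), hρ.apply_row hφ hb]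
    simp [ofRow, toMatrix_apply, hj]
  have hlim := (hφX.tendsto 0).mono_left (nhdsWithin_le_nhds (s := {0}ᶜ))
  simp only [X, zero_smul, zero_add] at hlim
  exact hlim.congr' (eventually_nhdsWithin_of_forall fun z hz => hφX_apply hz)

theorem apply_ofRow_swap (hγ : MapsShears t γ (transposeConj φ))
    (hφ : IsPreserver (blockTriangularSubalgebra ℂ ℂ κ) φ) (ht : ∀ i, κ i ≤ κ t) (u : ι → ℂ)
    (hu : u t = 1) :
    φ (ofRow t u hu).swap.toMatrix =
      (ofRow t (fun j => γ j (u j)) (by rw [hγ.apply_self, hu, id])).swap.toMatrix :=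
  (transposeConj_swap_toMatrix (P := (ofRow t u hu).swap)
    (Q := (ofRow t (fun j => γ j (u j)) (by rw [hγ.apply_self, hu, id])).swap)).mp
    (hγ.apply_row hφ.transposeConj ht u hu)

theorem isOrthPair (hρ : MapsShears b ρ φ) (hγ : MapsShears t γ (transposeConj φ))
    (hφ : IsPreserver (blockTriangularSubalgebra ℂ ℂ κ) φ) (hb : ∀ i, κ b ≤ κ i)
    (ht : ∀ i, κ i ≤ κ t) (hdiag : FixesDiagonal φ) (hbt : b ≠ t) : IsOrthPair b t ρ γ where
  left_id := hρ.apply_self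
  right_id := hγ.apply_self
  left_zero j := (hρ.apply_eq_zero_iff hφ hb hdiag j).mpr rfl
  right_zero j := (hγ.apply_eq_zero_iff hφ.transposeConj ht hdiag.transposeConj j).mpr rfl
  dotProduct_eq_zero {f u} hf hu hfu := by
    have h : (ofRow b f hf).Orth (ofRow t u hu).swap :=
      ⟨hfu, by simp [ofRow, RankOneIdempotent.swap, hbt.symm]⟩
    exact (hφ.orth (ofRow_toMatrix_mem hb f hf) (ofRow_swap_toMatrix_mem ht u hu)
      (hρ.apply_row hφ hb f hf) (hγ.apply_ofRow_swap hφ ht u hu) h).1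

end MapsShears

theorem MapsShears.apply_eq_mul (hρ : MapsShears b ρ φ) (h : IsOrthPair b t ρ γ)
    (hφ : IsPreserver (blockTriangularSubalgebra ℂ ℂ κ) φ) (hb : ∀ i, κ b ≤ κ i) (hbt : b ≠ t)
    (hm : ∃ m, m ≠ b ∧ m ≠ t) (x : ℂ) : ρ t x = ρ t 1 * x := by
  obtain ⟨m, hmb, hmt⟩ := hm
  have := addMonoidHom_apply_eq_mul_of_tendsto (.mk' (ρ t) (h.left_add hbt hmb hmt))
    (hρ.tendsto hφ hb hbt.symm x)
  rw [mul_comm]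
  exact this

section DiagonalUnit

variable {ι R : Type*} [Fintype ι] [DecidableEq ι] [CommRing R]

/-- The invertible diagonal matrix with the given invertible entries. -/
def diagonalUnit (δ : ι → Rˣ) : (Matrix ι ι R)ˣ :=
  Units.map (diagonalRingHom ι R) (MulEquiv.piUnits.symm δ)

theorem diagonalUnit_mul_mul_inv_apply (δ : ι → Rˣ) (X : Matrix ι ι R) (i j : ι) :
    ((diagonalUnit δ).val * X * (diagonalUnit δ)⁻¹.val) i j = δ i * X i j * (δ j)⁻¹.val := by
  rw [diagonalUnit, ← map_inv, Units.coe_map, Units.coe_map]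
  simp

end DiagonalUnit

namespace MapsShears

variable {δ : ι → ℂˣ}

theorem fixesRow_conj (hρ : MapsShears b ρ φ)
    (hφ : IsPreserver (blockTriangularSubalgebra ℂ ℂ κ) φ) (hb : ∀ i, κ b ≤ κ i)
    (hδ : ∀ j x, ρ j x = δ j * x) :
    FixesRow b fun X => diagonalUnit δ * φ X * (diagonalUnit δ)⁻¹.val := by
  have hδb : (δ b : ℂ) = 1 := by simpa [hρ.apply_self] using (hδ b 1).symm
  intro f hf
  ext i j
  beta_reduce
  rw [diagonalUnit_mul_mul_inv_apply, hρ.apply_row hφ hb f hf]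
  rcases eq_or_ne i b with rfl | hi
  · simp [ofRow, toMatrix_apply, hδb, hδ, mul_comm (δ j : ℂ)]
  · simp [ofRow, toMatrix_apply, hi]

theorem fixesRow_transposeConj_conj (hγ : MapsShears t γ (transposeConj φ))
    (hφ : IsPreserver (blockTriangularSubalgebra ℂ ℂ κ) φ) (ht : ∀ i, κ i ≤ κ t)
    (hδ : ∀ j x, δ j * γ j x = δ t * x) :
    FixesRow t (transposeConj fun X => diagonalUnit δ * φ X * (diagonalUnit δ)⁻¹.val) := by
  intro u hu
  refine (transposeConj_swap_toMatrix (P := (ofRow t u hu).swap)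
    (Q := (ofRow t u hu).swap)).mpr ?_
  ext i j
  rw [diagonalUnit_mul_mul_inv_apply, hγ.apply_ofRow_swap hφ ht u hu]
  rcases eq_or_ne j t with rfl | hj
  · simp [ofRow, RankOneIdempotent.swap, toMatrix_apply, hδ, mul_comm (δ j : ℂ)]
  · simp [ofRow, RankOneIdempotent.swap, toMatrix_apply, hj]

end MapsShears

theorem IsPreserver.exists_eq_conj_of_mapsShears
    (hφ : IsPreserver (blockTriangularSubalgebra ℂ ℂ κ) φ) (hb : ∀ i, κ b ≤ κ i)
    (ht : ∀ i, κ i ≤ κ t) (hbt : b ≠ t) (hm : ∃ m, m ≠ b ∧ m ≠ t) (hdiag : FixesDiagonal φ)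
    (hρ : MapsShears b ρ φ) :
    ∃ T : (Matrix ι ι ℂ)ˣ, ∀ X ∈ blockTriangularSubalgebra ℂ ℂ κ, φ X = T * X * T⁻¹.val := by
  obtain ⟨γ, hγ⟩ := hρ.exists_transposeConj hφ hb ht hbt hm hdiag
  have hpair := hρ.isOrthPair hγ hφ hb ht hdiag hbt
  have hρt := hρ.apply_eq_mul hpair hφ hb hbt hm
  have hne (j : ι) : ρ j 1 ≠ 0 := (hρ.apply_eq_zero_iff hφ hb hdiag j).not.mpr one_ne_zero
  set D := diagonalUnit fun j => Units.mk0 (ρ j 1) (hne j)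
  have hfix := (hφ.conj D).eqOn_id_of_fixesRow hb ht hbt hm
    (hρ.fixesRow_conj hφ hb (hpair.left_apply hbt hm (hne t) hρt))
    (hγ.fixesRow_transposeConj_conj hφ ht fun j x =>
      (hpair.apply_mul_apply hbt hm hρt j 1 x).trans (by rw [one_mul, Units.val_mk0]))
  refine ⟨D⁻¹, fun X hX => ?_⟩
  have hDX : D * φ X * D⁻¹.val = X := hfix hX
  rw [inv_inv, mul_assoc, Units.eq_inv_mul_iff_mul_eq]
  exact (Units.mul_inv_eq_iff_eq_mul D).mp hDX

end Coefficients

section Pattern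

variable {ι : Type*} [Fintype ι] [DecidableEq ι] {α : Type*} [LinearOrder α] {κ : ι → α}
  {φ : Matrix ι ι ℂ → Matrix ι ι ℂ} {b t : ι}

theorem IsPreserver.exists_fixesDiagonal_conj
    (hφ : IsPreserver (blockTriangularSubalgebra ℂ ℂ κ) φ) :
    ∃ S : (Matrix ι ι ℂ)ˣ, FixesDiagonal fun X => S * φ X * S⁻¹.val := by
  obtain ⟨T, hT⟩ := hφ.exists_conjDiagonal (S := 1) fun l => by
    rw [conjDiagonal_one]; exact blockTriangular_diagonal l
  simp only [conjDiagonal_one] at hT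
  exact ⟨T⁻¹, fun l => by beta_reduce; rw [hT, inv_inv, inv_mul_conjDiagonal_mul]⟩

theorem exists_transpose_conj_eq (T : (Matrix ι ι ℂ)ˣ) :
    ∃ U : (Matrix ι ι ℂ)ˣ, ∀ X : Matrix ι ι ℂ, (T.val * X * T⁻¹.val)ᵀ = U.val * Xᵀ * U⁻¹.val :=
  ⟨⟨T⁻¹.valᵀ, T.valᵀ, by rw [← transpose_mul, T.mul_inv, transpose_one],
    by rw [← transpose_mul, T.inv_mul, transpose_one]⟩, fun X => by
      rw [transpose_mul, transpose_mul, ← mul_assoc]; rfl⟩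

theorem eq_conj_of_conj_eq_conj {M : Type*} [Monoid M] {S T : Mˣ} {x y : M}
    (h : S * x * S⁻¹.val = T * y * T⁻¹.val) : x = (S⁻¹ * T : Mˣ) * y * (S⁻¹ * T)⁻¹.val := by
  rw [Units.mul_inv_eq_iff_eq_mul, ← Units.eq_inv_mul_iff_mul_eq] at h
  simp only [h, _root_.mul_inv_rev, inv_inv, Units.val_mul, mul_assoc]

theorem IsPreserver.exists_eq_conj_or_eq_conj_transpose
    (hφ : IsPreserver (blockTriangularSubalgebra ℂ ℂ κ) φ) (hb : ∀ i, κ b ≤ κ i)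
    (ht : ∀ i, κ i ≤ κ t) (hbt : b ≠ t) (hm : ∃ m, m ≠ b ∧ m ≠ t) :
    ∃ T : (Matrix ι ι ℂ)ˣ,
      (∀ X ∈ blockTriangularSubalgebra ℂ ℂ κ, φ X = T * X * T⁻¹.val) ∨
      (∀ X ∈ blockTriangularSubalgebra ℂ ℂ κ, φ X = T * Xᵀ * T⁻¹.val) := by
  obtain ⟨S, hS⟩ := hφ.exists_fixesDiagonal_conj
  have hψ := hφ.conj S
  have hthird (j : ι) : ∃ k, k ≠ b ∧ k ≠ j := by
    rcases eq_or_ne j t with rfl | hj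
    · exact hm
    · exact ⟨t, hbt.symm, hj.symm⟩
  obtain ⟨ρ, hρ⟩ | ⟨ρ, hρ⟩ := hψ.exists_mapsShears_or hb hS hthird
  · obtain ⟨T, hT⟩ := hψ.exists_eq_conj_of_mapsShears hb ht hbt hm hS hρ
    exact ⟨S⁻¹ * T, .inl fun X hX => eq_conj_of_conj_eq_conj (hT X hX)⟩
  · obtain ⟨T, hT⟩ := hψ.transpose.exists_eq_conj_of_mapsShears hb ht hbt hm hS.transpose hρ
    obtain ⟨U, hU⟩ := exists_transpose_conj_eq T
    refine ⟨S⁻¹ * U, .inr fun X hX => eq_conj_of_conj_eq_conj ?_⟩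
    rw [← hU, ← hT X hX, transpose_transpose]

end Pattern

section Conjugation

variable {ι K α : Type*} [Fintype ι] [LinearOrder ι] [Field K] [LinearOrder α] {β : ι → α}

-- If `T i j ≠ 0` with `β j < β i`, then the columns `≤ j` of `T⁻¹` vanish on the rows `≥ j`, so
-- they are `#{c // c ≤ j}` independent vectors supported on only `#{c // c < j}` coordinates.
theorem blockTriangular_of_forall_conj_single (hβ : Monotone β) {T : (Matrix ι ι K)ˣ}
    (h : ∀ a c, a ≤ c → (T.val * single a c 1 * T⁻¹.val).BlockTriangular β) :
    T.val.BlockTriangular β := by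
  intro i j hij
  by_contra hne
  have hzero : T⁻¹.val.toBlock (fun c => ¬c < j) (· ≤ j) = 0 := by
    ext c l
    have hicl := h j c (not_lt.mp c.2) ((hβ l.2).trans_lt hij)
    rw [single_eq_single_vecMulVec_single, mul_vecMulVec, vecMulVec_mul, mulVec_single_one,
      single_one_vecMul] at hicl
    exact (mul_eq_zero.mp hicl).resolve_left hne
  have hmul : T.val.toBlock (· ≤ j) (· < j) * T⁻¹.val.toBlock (· < j) (· ≤ j) = 1 := by
    rw [← toBlock_one_self, ← T.mul_inv, toBlock_mul_eq_add (· ≤ j) (· < j), hzero,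
      Matrix.mul_zero, add_zero]
  have hcard : Fintype.card {c // c < j} < Fintype.card {c // c ≤ j} :=
    Fintype.card_lt_of_injective_of_notMem (Subtype.map id fun _ => le_of_lt)
      (Subtype.map_injective _ Function.injective_id) (b := ⟨j, le_rfl⟩)
      fun ⟨c, hc⟩ => c.2.ne (congrArg Subtype.val hc)
  have hrank := rank_mul_le_left (T.val.toBlock (· ≤ j) (· < j)) (T⁻¹.val.toBlock (· < j) (· ≤ j))
  rw [hmul, rank_one] at hrank
  exact (hrank.trans (rank_le_card_width _)).not_gt hcard

theorem image_subset_and_exists_conj (hβ : Monotone β) {𝒜 : Set (Matrix ι ι K)}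
    {φ g : Matrix ι ι K → Matrix ι ι K} {T : (Matrix ι ι K)ˣ}
    (hsingle : ∀ a c, a ≤ c → single a c 1 ∈ g '' 𝒜)
    (hφ : ∀ X ∈ 𝒜, φ X = T.val * g X * T⁻¹.val)
    (hmaps : ∀ X ∈ 𝒜, φ X ∈ blockTriangularSubalgebra K K β) :
    g '' 𝒜 ⊆ blockTriangularSubalgebra K K β ∧ ∃ T ∈ blockTriangularSubalgebra K K β,
      IsUnit T.det ∧ T⁻¹ ∈ blockTriangularSubalgebra K K β ∧ ∀ X ∈ 𝒜, φ X = T * g X * T⁻¹ := by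
  have hconj (Y) (hY : Y ∈ g '' 𝒜) :
      T.val * Y * T⁻¹.val ∈ blockTriangularSubalgebra K K β := by
    obtain ⟨X, hX, rfl⟩ := hY
    exact hφ X hX ▸ hmaps X hX
  have hT : T.val ∈ blockTriangularSubalgebra K K β :=
    blockTriangular_of_forall_conj_single hβ fun a c hac => hconj _ (hsingle a c hac)
  have hT_inv := units_inv_mem_blockTriangularSubalgebra hT
  refine ⟨fun Y hY => ?_, T, hT, (isUnit_iff_isUnit_det _).mp T.isUnit, ?_, ?_⟩
  · have := mul_mem (mul_mem hT_inv (hconj Y hY)) hT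
    rwa [← mul_assoc, ← mul_assoc, T.inv_mul, one_mul, mul_assoc, T.inv_mul, mul_one] at this
  · rwa [← coe_units_inv]
  · simpa only [coe_units_inv] using hφ

end Conjugation

section ExchangeMatrix

variable {n : ℕ}

theorem monotone_blockIdx (k : List ℕ) : Monotone (blockIdx k) := fun _ _ hij =>
  Finset.card_le_card (Finset.monotone_filter_right _ fun _ _ hs => hs.trans hij)

theorem single_mem_blockAlg (k : List ℕ) {a c : Fin n} (hac : a ≤ c) :
    single a c 1 ∈ blockAlg n k :=
  blockTriangular_single (b := fun i : Fin n => blockIdx k i) (monotone_blockIdx k hac) 1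

theorem exchMat_eq_permMatrix (n : ℕ) : exchMat n = Fin.revPerm.permMatrix ℂ := by
  ext i j
  simp only [exchMat, of_apply, PEquiv.toMatrix_apply, Equiv.toPEquiv_apply, Option.mem_some_iff,
    Fin.revPerm_apply, Fin.ext_iff, Fin.val_rev]
  congr 1
  grind

theorem exchMat_mul_self (n : ℕ) : exchMat n * exchMat n = 1 := by
  have hrev : (Fin.revPerm : Equiv.Perm (Fin n)) * Fin.revPerm = 1 := Equiv.ext Fin.rev_rev
  rw [exchMat_eq_permMatrix, ← permMatrix_mul, hrev, permMatrix_one]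

theorem exchMat_mul_mul_exchMat (X : Matrix (Fin n) (Fin n) ℂ) :
    exchMat n * X * exchMat n = X.submatrix Fin.revPerm Fin.revPerm := by
  rw [exchMat_eq_permMatrix, PEquiv.toMatrix_toPEquiv_mul, PEquiv.mul_toMatrix_toPEquiv]
  rfl

/-- The exchange matrix as a unit, being its own inverse. -/
def exchUnit (n : ℕ) : (Matrix (Fin n) (Fin n) ℂ)ˣ :=
  ⟨exchMat n, exchMat n, exchMat_mul_self n, exchMat_mul_self n⟩

theorem conj_eq_conj_exchMat (T : (Matrix (Fin n) (Fin n) ℂ)ˣ) (Y : Matrix (Fin n) (Fin n) ℂ) :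
    T * Y * T⁻¹.val =
      (T * exchUnit n).val * (exchMat n * Y * exchMat n) * (T * exchUnit n)⁻¹.val := by
  change _ = T * exchMat n * (exchMat n * Y * exchMat n) * (exchMat n * T⁻¹.val)
  simp only [← mul_assoc]
  simp only [mul_assoc _ (exchMat n) (exchMat n), exchMat_mul_self, mul_one]

theorem single_mem_image_exchMat_mul_transpose (k : List ℕ) {a c : Fin n} (hac : a ≤ c) :
    single a c 1 ∈ (fun X => exchMat n * Xᵀ * exchMat n) '' blockAlg n k := by
  refine ⟨single c.rev a.rev 1, single_mem_blockAlg k (Fin.rev_le_rev.mpr hac), ?_⟩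
  beta_reduce
  rw [exchMat_mul_mul_exchMat, transpose_single, submatrix_single_equiv, Fin.revPerm_symm,
    Fin.revPerm_apply, Fin.revPerm_apply, Fin.rev_rev, Fin.rev_rev]

end ExchangeMatrix

theorem main_between_blockAlgs {n : ℕ} (hn : 3 ≤ n) (𝒜 ℬ : Set (Matrix (Fin n) (Fin n) ℂ))
    (h𝒜 : IsBlockUT n 𝒜) (hℬ : IsBlockUT n ℬ)
    (φ : Matrix (Fin n) (Fin n) ℂ → Matrix (Fin n) (Fin n) ℂ)
    (hmaps : ∀ X ∈ 𝒜, φ X ∈ ℬ)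
    (hcont : ContinuousOn φ 𝒜)
    (hinj : Set.InjOn φ 𝒜)
    (hcomm : ∀ X ∈ 𝒜, ∀ Y ∈ 𝒜, X * Y = Y * X → φ X * φ Y = φ Y * φ X)
    (hspec : ∀ X ∈ 𝒜, spectrum ℂ (φ X) = spectrum ℂ X) :
    (𝒜 ⊆ ℬ ∧ ∃ T ∈ ℬ, IsUnit T.det ∧ T⁻¹ ∈ ℬ ∧
      ∀ X ∈ 𝒜, φ X = T * X * T⁻¹) ∨
    ((fun X : Matrix (Fin n) (Fin n) ℂ => exchMat n * Xᵀ * exchMat n) '' 𝒜 ⊆ ℬ ∧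
      ∃ T ∈ ℬ, IsUnit T.det ∧ T⁻¹ ∈ ℬ ∧
        ∀ X ∈ 𝒜, φ X = T * (exchMat n * Xᵀ * exchMat n) * T⁻¹) := by
  obtain ⟨k, -, -, rfl⟩ := h𝒜
  obtain ⟨l, -, -, rfl⟩ := hℬ
  have hφ : IsPreserver (blockTriangularSubalgebra ℂ ℂ fun i : Fin n => blockIdx k i) φ :=
    ⟨hcont, hinj, hcomm, hspec⟩
  have hl : Monotone fun i : Fin n => blockIdx l i := fun _ _ h => monotone_blockIdx l h
  obtain ⟨T, hT | hT⟩ := hφ.exists_eq_conj_or_eq_conj_transpose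
    (b := ⟨0, by lia⟩) (t := ⟨n - 1, by lia⟩)
    (fun _ => monotone_blockIdx k (Nat.zero_le _))
    (fun i => monotone_blockIdx k (Nat.le_sub_one_of_lt i.2))
    (Fin.ne_of_val_ne (by lia)) ⟨⟨1, by lia⟩, Fin.ne_of_val_ne (by lia), Fin.ne_of_val_ne (by lia)⟩
  · left
    obtain ⟨hsub, hconj⟩ := image_subset_and_exists_conj hl (g := id)
      (fun _ _ hac => ⟨_, single_mem_blockAlg k hac, rfl⟩) hT hmaps
    exact ⟨(Set.image_id _).symm.subset.trans hsub, hconj⟩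
  · right
    exact image_subset_and_exists_conj hl
      (fun a c => single_mem_image_exchMat_mul_transpose k)
      (fun X hX => (hT X hX).trans (conj_eq_conj_exchMat T Xᵀ)) hmaps
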